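/- (Corollary to the corrected theorem) Let I₁,…,I_k, L be compact intervals as above. There exists ε > 0 such that for all A, S ∈ S²(I,L) with A locally affine and ‖S − A‖_{C²} < ε, the maximal invariant Cantor set C_S is not C¹-minimal, i.e., C_S is not the minimal set of any C¹ diffeomorphism of the circle. -/

import Mathlib

/-- A set K in the circle ℝ/ℤ is C¹-minimal if it is a minimal set of some
C¹ diffeomorphism of the circle (given by a C¹ lift F with nonvanishing
derivative satisfying F(x+1) = F(x) ± 1). -/
def IsC1Minimal (K : Set (AddCircle (1 : ℝ))) : Prop :=
  ∃ (F : ℝ → ℝ) (f : AddCircle (1 : ℝ) → AddCircle (1 : ℝ)),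
    ContDiff ℝ 1 F ∧ (∀ x : ℝ, deriv F x ≠ 0) ∧
    (∃ e : ℝ, (e = 1 ∨ e = -1) ∧ ∀ x : ℝ, F (x + 1) = F x + e) ∧
    (∀ x : ℝ, f (x : ℝ) = ((F x : ℝ) : AddCircle (1 : ℝ))) ∧
    IsClosed K ∧ K.Nonempty ∧ f '' K = K ∧
    ∀ x ∈ K, closure {y | ∃ n : ℕ, f^[n] x = y} = K

/-
The gaps of `C_S` are labelled by a word `w` and an index `j`, and since `S` is nearly affine the
logarithm of the length of the gap `(w, j)` is, up to a controlled error, the formal log-length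
`s w₁ + ⋯ + s wₙ + t j`. The lift `F` of a `C¹` diffeomorphism preserving `C_S` permutes the gaps
and has negligible distortion on deep cylinders. Differences of formal log-lengths of bounded words
take finitely many values, hence vanish or are bounded away from `0`, so below a deep cylinder `F`
shifts all formal log-lengths by the same constant. The gaps in a minimal orbit do not recur, so
their labels get arbitrarily deep, which forces iterates of `F` to map one cylinder `v` into deep
cylinders. The first return of `v` into itself by `F ^ r` then confines a forward orbit to `r`
cylinders of depth `r`, whereas there are at least `2 ^ r` of them: the orbit is not dense.
-/

section Order

open Set

variable {α β : Type*} [LinearOrder α] [LinearOrder β]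

theorem image_mem_uIcc_iff {f : α → β} {s : Set α} (hf : StrictMonoOn f s ∨ StrictAntiOn f s)
    {x y z : α} (hx : x ∈ s) (hy : y ∈ s) (hz : z ∈ s) :
    f z ∈ uIcc (f x) (f y) ↔ z ∈ uIcc x y := by
  rcases hf with hf | hf
  · simp only [mem_uIcc, hf.le_iff_le hx hz, hf.le_iff_le hz hy, hf.le_iff_le hy hz,
      hf.le_iff_le hz hx]
  · simp only [mem_uIcc, hf.le_iff_ge hx hz, hf.le_iff_ge hz hy, hf.le_iff_ge hy hz,
      hf.le_iff_ge hz hx]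
    tauto

/-- `x` and `y`, in either order, are the endpoints of a bounded complementary gap of `X`. -/
def IsGap (X : Set α) (x y : α) : Prop :=
  x ∈ X ∧ y ∈ X ∧ x ≠ y ∧ ∀ z ∈ X, z ∈ uIcc x y → z = x ∨ z = y

theorem IsGap.symm {X : Set α} {x y : α} (h : IsGap X x y) : IsGap X y x :=
  ⟨h.2.1, h.1, h.2.2.1.symm, fun z hz hzxy => (h.2.2.2 z hz (by rwa [uIcc_comm])).symm⟩

end Order

/-- A contracting iterated function system of `m + 1` strictly monotone branches on an interval
`[c, d]` shorter than the circle, with disjoint images listed from left to right, together with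
an invariant compact set `attractor` of which `[c, d]` is the convex hull. The inverse branches of
the expanding map `S`, restricted to the hull of `C_S`, form such a system. -/
structure IntervalIFS (m : ℕ) where
  c : ℝ
  d : ℝ
  ratio : NNReal
  branch : Fin (m + 1) → ℝ → ℝ
  attractor : Set ℝ
  c_lt_d : c < d
  d_sub_c_lt_one : d - c < 1
  ratio_lt_one : ratio < 1
  isCompact_attractor : IsCompact attractor
  c_mem_attractor : c ∈ attractor
  d_mem_attractor : d ∈ attractor
  attractor_subset : attractor ⊆ Set.Icc c d
  iUnion_image : ⋃ i, branch i '' attractor = attractor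
  lipschitzOnWith_branch : ∀ i, LipschitzOnWith ratio (branch i) (Set.Icc c d)
  branch_mono_or_anti : ∀ i,
    StrictMonoOn (branch i) (Set.Icc c d) ∨ StrictAntiOn (branch i) (Set.Icc c d)
  branch_lt_branch : ∀ ⦃i i'⦄, i < i' →
    ∀ ⦃x⦄, x ∈ Set.Icc c d → ∀ ⦃y⦄, y ∈ Set.Icc c d → branch i x < branch i' y

namespace IntervalIFS

open Set

variable {m : ℕ} (I : IntervalIFS m) {u v w q : List (Fin (m + 1))} {i i' : Fin (m + 1)}
  {j j' : Fin m} {x y z : ℝ}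

theorem left_mem : I.c ∈ Icc I.c I.d := left_mem_Icc.2 I.c_lt_d.le

theorem right_mem : I.d ∈ Icc I.c I.d := right_mem_Icc.2 I.c_lt_d.le

theorem branch_mem_attractor (i : Fin (m + 1)) (hx : x ∈ I.attractor) :
    I.branch i x ∈ I.attractor :=
  I.iUnion_image ▸ mem_iUnion.2 ⟨i, mem_image_of_mem _ hx⟩

theorem exists_branch_eq (hx : x ∈ I.attractor) : ∃ i, ∃ y ∈ I.attractor, I.branch i y = x :=
  mem_iUnion.1 (I.iUnion_image.symm ▸ hx)

/-- The left endpoint of the image of the `i`-th branch. -/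
noncomputable def leftEnd (i : Fin (m + 1)) : ℝ := min (I.branch i I.c) (I.branch i I.d)

/-- The right endpoint of the image of the `i`-th branch. -/
noncomputable def rightEnd (i : Fin (m + 1)) : ℝ := max (I.branch i I.c) (I.branch i I.d)

theorem leftEnd_mem_image (i : Fin (m + 1)) : I.leftEnd i ∈ I.branch i '' I.attractor :=
  (min_choice (I.branch i I.c) (I.branch i I.d)).elim
    (fun h => ⟨_, I.c_mem_attractor, h.symm⟩) fun h => ⟨_, I.d_mem_attractor, h.symm⟩

theorem rightEnd_mem_image (i : Fin (m + 1)) : I.rightEnd i ∈ I.branch i '' I.attractor :=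
  (max_choice (I.branch i I.c) (I.branch i I.d)).elim
    (fun h => ⟨_, I.c_mem_attractor, h.symm⟩) fun h => ⟨_, I.d_mem_attractor, h.symm⟩

theorem image_branch_subset (i : Fin (m + 1)) : I.branch i '' I.attractor ⊆ I.attractor :=
  image_subset_iff.2 fun _ => I.branch_mem_attractor i

theorem leftEnd_mem_attractor (i : Fin (m + 1)) : I.leftEnd i ∈ I.attractor :=
  I.image_branch_subset i (I.leftEnd_mem_image i)

theorem rightEnd_mem_attractor (i : Fin (m + 1)) : I.rightEnd i ∈ I.attractor :=
  I.image_branch_subset i (I.rightEnd_mem_image i)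

theorem branch_mem_Icc_ends (i : Fin (m + 1)) (hx : x ∈ Icc I.c I.d) :
    I.branch i x ∈ Icc (I.leftEnd i) (I.rightEnd i) := by
  change I.branch i x ∈ uIcc (I.branch i I.c) (I.branch i I.d)
  rw [image_mem_uIcc_iff (I.branch_mono_or_anti i) I.left_mem I.right_mem hx]
  exact Icc_subset_uIcc hx

theorem mapsTo_branch (i : Fin (m + 1)) : MapsTo (I.branch i) (Icc I.c I.d) (Icc I.c I.d) :=
  fun _ hx => Icc_subset_Icc (I.attractor_subset (I.leftEnd_mem_attractor i)).1
    (I.attractor_subset (I.rightEnd_mem_attractor i)).2 (I.branch_mem_Icc_ends i hx)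

theorem rightEnd_lt_leftEnd (h : i < i') : I.rightEnd i < I.leftEnd i' := by
  obtain ⟨x, hx, hxi⟩ := I.rightEnd_mem_image i
  obtain ⟨y, hy, hyi⟩ := I.leftEnd_mem_image i'
  rw [← hxi, ← hyi]
  exact I.branch_lt_branch h (I.attractor_subset hx) (I.attractor_subset hy)

theorem leftEnd_mono : Monotone I.leftEnd := fun _ _ h =>
  h.eq_or_lt.elim (fun h => h ▸ le_rfl) fun h => min_le_max.trans (I.rightEnd_lt_leftEnd h).le

theorem rightEnd_mono : Monotone I.rightEnd := fun _ _ h =>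
  h.eq_or_lt.elim (fun h => h ▸ le_rfl) fun h => (I.rightEnd_lt_leftEnd h).le.trans min_le_max

theorem eq_of_branch_eq (hx : x ∈ Icc I.c I.d) (hy : y ∈ Icc I.c I.d)
    (h : I.branch i x = I.branch i' y) : i = i' := by
  rcases lt_trichotomy i i' with hi | hi | hi
  · exact absurd h (I.branch_lt_branch hi hx hy).ne
  · exact hi
  · exact absurd h (I.branch_lt_branch hi hy hx).ne'

/-- The composition of branches along a word. The head of the word is applied first, so that the
words extending `w` to the left describe the pieces of the image of `wordMap w`. -/
def wordMap : List (Fin (m + 1)) → ℝ → ℝ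
  | [], x => x
  | i :: w, x => wordMap w (I.branch i x)

theorem wordMap_append (u w : List (Fin (m + 1))) (x : ℝ) :
    I.wordMap (u ++ w) x = I.wordMap w (I.wordMap u x) := by
  induction u generalizing x with
  | nil => rfl
  | cons i u ih => exact ih (I.branch i x)

theorem mapsTo_wordMap (w : List (Fin (m + 1))) :
    MapsTo (I.wordMap w) (Icc I.c I.d) (Icc I.c I.d) := by
  induction w with
  | nil => exact mapsTo_id _
  | cons i w ih => exact ih.comp (I.mapsTo_branch i)

theorem wordMap_mem_attractor (w : List (Fin (m + 1))) (hx : x ∈ I.attractor) :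
    I.wordMap w x ∈ I.attractor := by
  induction w generalizing x with
  | nil => exact hx
  | cons i w ih => exact ih (I.branch_mem_attractor i hx)

theorem wordMap_mono_or_anti (w : List (Fin (m + 1))) :
    StrictMonoOn (I.wordMap w) (Icc I.c I.d) ∨ StrictAntiOn (I.wordMap w) (Icc I.c I.d) := by
  induction w with
  | nil => exact Or.inl fun _ _ _ _ h => h
  | cons i w ih =>
    have hi := I.mapsTo_branch i
    rcases ih with hw | hw <;> rcases I.branch_mono_or_anti i with hb | hb
    · exact Or.inl (hw.comp hb hi)
    · exact Or.inr (hw.comp_strictAntiOn hb hi)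
    · exact Or.inr (hw.comp_strictMonoOn hb hi)
    · exact Or.inl (hw.comp hb hi)

theorem injOn_wordMap (w : List (Fin (m + 1))) : InjOn (I.wordMap w) (Icc I.c I.d) :=
  (I.wordMap_mono_or_anti w).elim StrictMonoOn.injOn StrictAntiOn.injOn

theorem wordMap_mem_uIcc_iff (w : List (Fin (m + 1))) (hx : x ∈ I.attractor)
    (hy : y ∈ I.attractor) (hz : z ∈ I.attractor) :
    I.wordMap w z ∈ uIcc (I.wordMap w x) (I.wordMap w y) ↔ z ∈ uIcc x y :=
  image_mem_uIcc_iff (I.wordMap_mono_or_anti w) (I.attractor_subset hx) (I.attractor_subset hy)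
    (I.attractor_subset hz)

theorem lipschitzOnWith_wordMap (w : List (Fin (m + 1))) :
    LipschitzOnWith (I.ratio ^ w.length) (I.wordMap w) (Icc I.c I.d) := by
  induction w with
  | nil => rw [List.length_nil, pow_zero]; exact LipschitzWith.id.lipschitzOnWith
  | cons i w ih =>
    rw [List.length_cons, pow_succ]
    exact ih.comp (I.lipschitzOnWith_branch i) (I.mapsTo_branch i)

/-- The piece of the attractor with address `w`. -/
def cylinder (w : List (Fin (m + 1))) : Set ℝ := I.wordMap w '' I.attractor

theorem cylinder_nil : I.cylinder [] = I.attractor := image_id I.attractor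

theorem cylinder_subset_attractor (w : List (Fin (m + 1))) : I.cylinder w ⊆ I.attractor :=
  image_subset_iff.2 fun _ => I.wordMap_mem_attractor w

theorem cylinder_append_subset (u w : List (Fin (m + 1))) :
    I.cylinder (u ++ w) ⊆ I.cylinder w := by
  rintro _ ⟨x, hx, rfl⟩
  exact ⟨_, I.wordMap_mem_attractor u hx, (I.wordMap_append u w x).symm⟩

theorem isCompact_cylinder (w : List (Fin (m + 1))) : IsCompact (I.cylinder w) :=
  I.isCompact_attractor.image_of_continuousOn
    ((I.lipschitzOnWith_wordMap w).continuousOn.mono I.attractor_subset)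

theorem exists_mem_cylinder_cons (hx : x ∈ I.cylinder w) : ∃ i, x ∈ I.cylinder (i :: w) := by
  obtain ⟨y, hy, rfl⟩ := hx
  obtain ⟨i, z, hz, rfl⟩ := I.exists_branch_eq hy
  exact ⟨i, z, hz, rfl⟩

theorem exists_mem_cylinder (n : ℕ) (hx : x ∈ I.attractor) :
    ∃ w, w.length = n ∧ x ∈ I.cylinder w := by
  induction n with
  | zero => exact ⟨[], rfl, by rwa [cylinder_nil]⟩
  | succ n ih =>
    obtain ⟨w, rfl, hw⟩ := ih
    obtain ⟨i, hi⟩ := I.exists_mem_cylinder_cons hw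
    exact ⟨i :: w, rfl, hi⟩

theorem eq_of_mem_cylinder (hlen : w.length = v.length) (hw : x ∈ I.cylinder w)
    (hv : x ∈ I.cylinder v) : w = v := by
  induction w generalizing v with
  | nil => exact (List.length_eq_zero_iff.1 hlen.symm).symm
  | cons i w ih =>
    obtain ⟨i', v, rfl⟩ := List.exists_of_length_succ v hlen.symm
    obtain rfl : w = v := ih (Nat.succ.inj hlen) (I.cylinder_append_subset [i] w hw)
      (I.cylinder_append_subset [i'] v hv)
    obtain ⟨y, hy, rfl⟩ := hw
    obtain ⟨z, hz, hzy⟩ := hv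
    have hzy : I.branch i' z = I.branch i y :=
      I.injOn_wordMap w (I.mapsTo_branch i' (I.attractor_subset hz))
        (I.mapsTo_branch i (I.attractor_subset hy)) hzy
    rw [I.eq_of_branch_eq (I.attractor_subset hz) (I.attractor_subset hy) hzy]

theorem mem_cylinder_of_mem_uIcc (hx : x ∈ I.cylinder w) (hy : y ∈ I.cylinder w)
    (hz : z ∈ I.attractor) (hzxy : z ∈ uIcc x y) : z ∈ I.cylinder w := by
  induction w with
  | nil => rwa [cylinder_nil]
  | cons i w ih =>
    obtain ⟨z', hz', rfl⟩ :=
      ih (I.cylinder_append_subset [i] w hx) (I.cylinder_append_subset [i] w hy)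
    obtain ⟨x, hx, rfl⟩ := hx
    obtain ⟨y, hy, rfl⟩ := hy
    have hzb := (I.wordMap_mem_uIcc_iff w (I.branch_mem_attractor i hx)
      (I.branch_mem_attractor i hy) hz').1 hzxy
    obtain ⟨i', t, ht, rfl⟩ := I.exists_branch_eq hz'
    have hxI := I.attractor_subset hx
    have hyI := I.attractor_subset hy
    have htI := I.attractor_subset ht
    obtain rfl : i' = i := by
      rcases lt_trichotomy i' i with h | h | h
      · exact absurd hzb.1 (lt_min (I.branch_lt_branch h htI hxI)
          (I.branch_lt_branch h htI hyI)).not_ge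
      · exact h
      · exact absurd hzb.2 (max_lt (I.branch_lt_branch h hxI htI)
          (I.branch_lt_branch h hyI htI)).not_ge
    exact ⟨t, ht, rfl⟩

theorem exists_pos_forall_mem_cylinder (hx : x ∈ I.cylinder w) :
    ∃ η > 0, ∀ y ∈ I.attractor, |y - x| < η → y ∈ I.cylinder w := by
  set others : Set ℝ := ⋃ v ∈ {v : List (Fin (m + 1)) | v.length = w.length ∧ v ≠ w}, I.cylinder v
  have hfin : {v : List (Fin (m + 1)) | v.length = w.length ∧ v ≠ w}.Finite :=
    (List.finite_length_eq (Fin (m + 1)) w.length).subset fun _ hv => hv.1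
  have hclosed : IsClosed others :=
    (hfin.isCompact_biUnion fun v _ => I.isCompact_cylinder v).isClosed
  have hxo : x ∈ othersᶜ := by
    simp only [others, mem_compl_iff, mem_iUnion, not_exists]
    exact fun v hv hxv => hv.2 (I.eq_of_mem_cylinder hv.1 hxv hx)
  obtain ⟨η, hη, hball⟩ := Metric.isOpen_iff.1 hclosed.isOpen_compl x hxo
  refine ⟨η, hη, fun y hy hyx => ?_⟩
  obtain ⟨v, hv, hyv⟩ := I.exists_mem_cylinder w.length hy
  rcases eq_or_ne v w with rfl | hvw
  · exact hyv
  · exact absurd (mem_biUnion (mem_ofPred.2 ⟨hv, hvw⟩) hyv) (hball hyx)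

/-- One endpoint of the gap labelled `(w, j)`, the image under `wordMap w` of the gap between the
branches `j` and `j + 1`. -/
noncomputable def gapFst (w : List (Fin (m + 1))) (j : Fin m) : ℝ :=
  I.wordMap w (I.rightEnd j.castSucc)

/-- The other endpoint of the gap labelled `(w, j)`. -/
noncomputable def gapSnd (w : List (Fin (m + 1))) (j : Fin m) : ℝ :=
  I.wordMap w (I.leftEnd j.succ)

theorem gapFst_mem_cylinder_cons (w : List (Fin (m + 1))) (j : Fin m) :
    I.gapFst w j ∈ I.cylinder (j.castSucc :: w) := by
  obtain ⟨x, hx, hxj⟩ := I.rightEnd_mem_image j.castSucc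
  exact ⟨x, hx, congrArg (I.wordMap w) hxj⟩

theorem gapSnd_mem_cylinder_cons (w : List (Fin (m + 1))) (j : Fin m) :
    I.gapSnd w j ∈ I.cylinder (j.succ :: w) := by
  obtain ⟨x, hx, hxj⟩ := I.leftEnd_mem_image j.succ
  exact ⟨x, hx, congrArg (I.wordMap w) hxj⟩

theorem gapFst_mem_cylinder (w : List (Fin (m + 1))) (j : Fin m) :
    I.gapFst w j ∈ I.cylinder w :=
  I.cylinder_append_subset [_] w (I.gapFst_mem_cylinder_cons w j)

theorem gapSnd_mem_cylinder (w : List (Fin (m + 1))) (j : Fin m) :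
    I.gapSnd w j ∈ I.cylinder w :=
  I.cylinder_append_subset [_] w (I.gapSnd_mem_cylinder_cons w j)

theorem gapFst_mem_attractor (w : List (Fin (m + 1))) (j : Fin m) :
    I.gapFst w j ∈ I.attractor :=
  I.cylinder_subset_attractor w (I.gapFst_mem_cylinder w j)

theorem gapSnd_mem_attractor (w : List (Fin (m + 1))) (j : Fin m) :
    I.gapSnd w j ∈ I.attractor :=
  I.cylinder_subset_attractor w (I.gapSnd_mem_cylinder w j)

theorem not_gap_mem_cylinder_cons :
    ¬(I.gapFst w j ∈ I.cylinder (i :: w) ∧ I.gapSnd w j ∈ I.cylinder (i :: w)) := by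
  rintro ⟨hfst, hsnd⟩
  have h : j.castSucc :: w = j.succ :: w :=
    (I.eq_of_mem_cylinder (by rfl) (I.gapFst_mem_cylinder_cons w j) hfst).trans
      (I.eq_of_mem_cylinder (by rfl) hsnd (I.gapSnd_mem_cylinder_cons w j))
  exact j.castSucc_lt_succ.ne (List.cons.inj h).1

theorem gapFst_ne_gapSnd (w : List (Fin (m + 1))) (j : Fin m) :
    I.gapFst w j ≠ I.gapSnd w j := fun h =>
  I.not_gap_mem_cylinder_cons ⟨I.gapFst_mem_cylinder_cons w j, h ▸ I.gapFst_mem_cylinder_cons w j⟩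

theorem suffix_of_gap_mem_cylinder (hfst : I.gapFst w j ∈ I.cylinder q)
    (hsnd : I.gapSnd w j ∈ I.cylinder q) : q <:+ w := by
  rcases le_or_gt q.length w.length with hlen | hlen
  · have hw : w.drop (w.length - q.length) = q := by
      refine I.eq_of_mem_cylinder (List.length_drop.trans (Nat.sub_sub_self hlen)) ?_ hfst
      refine I.cylinder_append_subset (w.take (w.length - q.length)) _ ?_
      rw [List.take_append_drop]
      exact I.gapFst_mem_cylinder w j
    exact hw ▸ List.drop_suffix _ w
  · set v := q.drop (q.length - (w.length + 1))
    have hvlen : v.length = w.length + 1 := List.length_drop.trans (Nat.sub_sub_self hlen)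
    have hqv : I.cylinder q ⊆ I.cylinder v := by
      conv_lhs => rw [← List.take_append_drop (q.length - (w.length + 1)) q]
      exact I.cylinder_append_subset _ v
    have hv : j.castSucc :: w = v :=
      I.eq_of_mem_cylinder hvlen.symm (I.gapFst_mem_cylinder_cons w j) (hqv hfst)
    exact absurd ⟨hv ▸ hqv hfst, hv ▸ hqv hsnd⟩ I.not_gap_mem_cylinder_cons

theorem exists_gap_mem_uIcc (hx : x ∈ I.cylinder w) (hy : y ∈ I.cylinder w)
    (h : ∀ i, ¬(x ∈ I.cylinder (i :: w) ∧ y ∈ I.cylinder (i :: w))) :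
    ∃ j, I.gapFst w j ∈ uIcc x y ∧ I.gapSnd w j ∈ uIcc x y := by
  obtain ⟨i, x, hxK, rfl⟩ := I.exists_mem_cylinder_cons hx
  obtain ⟨i', y, hyK, rfl⟩ := I.exists_mem_cylinder_cons hy
  wlog hii : i < i' generalizing i i' x y
  · have hne : i ≠ i' := by
      rintro rfl
      exact h i ⟨⟨_, hxK, rfl⟩, ⟨_, hyK, rfl⟩⟩
    simp only [uIcc_comm (I.wordMap (i :: w) x)]
    exact this i' y hyK hy i x hxK hx (fun i hi => h i hi.symm)
      (lt_of_le_of_ne (not_lt.1 hii) hne.symm)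
  obtain ⟨j, rfl⟩ : ∃ j : Fin m, j.castSucc = i := Fin.exists_castSucc_eq.2 (Fin.ne_last_of_lt hii)
  have hxj := I.branch_mem_Icc_ends j.castSucc (I.attractor_subset hxK)
  have hyi := I.branch_mem_Icc_ends i' (I.attractor_subset hyK)
  have hgap := I.rightEnd_lt_leftEnd j.castSucc_lt_succ
  have hsucc : I.leftEnd j.succ ≤ I.branch i' y :=
    (I.leftEnd_mono (Fin.castSucc_lt_iff_succ_le.1 hii)).trans hyi.1
  have hxb := I.branch_mem_attractor j.castSucc hxK
  have hyb := I.branch_mem_attractor i' hyK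
  refine ⟨j, (I.wordMap_mem_uIcc_iff w hxb hyb (I.rightEnd_mem_attractor _)).2 ?_,
    (I.wordMap_mem_uIcc_iff w hxb hyb (I.leftEnd_mem_attractor _)).2 ?_⟩
  · exact Icc_subset_uIcc ⟨hxj.2, hgap.le.trans hsucc⟩
  · exact Icc_subset_uIcc ⟨hxj.2.trans hgap.le, hsucc⟩

theorem isGap_gapFst_gapSnd (w : List (Fin (m + 1))) (j : Fin m) :
    IsGap I.attractor (I.gapFst w j) (I.gapSnd w j) := by
  refine ⟨I.gapFst_mem_attractor w j, I.gapSnd_mem_attractor w j, I.gapFst_ne_gapSnd w j,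
    fun z hz hzw => ?_⟩
  obtain ⟨t, ht, rfl⟩ := I.mem_cylinder_of_mem_uIcc (I.gapFst_mem_cylinder w j)
    (I.gapSnd_mem_cylinder w j) hz hzw
  have hgap := (I.rightEnd_lt_leftEnd j.castSucc_lt_succ).le
  have htj := (I.wordMap_mem_uIcc_iff w (I.rightEnd_mem_attractor _)
    (I.leftEnd_mem_attractor _) ht).1 hzw
  rw [uIcc_of_le hgap] at htj
  obtain ⟨i, y, hy, rfl⟩ := I.exists_branch_eq ht
  have hyi := I.branch_mem_Icc_ends i (I.attractor_subset hy)
  rcases le_or_gt i j.castSucc with hi | hi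
  · exact Or.inl (congrArg _ (le_antisymm (hyi.2.trans (I.rightEnd_mono hi)) htj.1))
  · have hi : j.succ ≤ i := Fin.castSucc_lt_iff_succ_le.1 hi
    exact Or.inr (congrArg _ (le_antisymm htj.2 ((I.leftEnd_mono hi).trans hyi.1)))

theorem wordMap_left_ne_right (w : List (Fin (m + 1))) : I.wordMap w I.c ≠ I.wordMap w I.d :=
  fun h => I.c_lt_d.ne (I.injOn_wordMap w I.left_mem I.right_mem h)

theorem mem_uIcc_of_mem_cylinder (hx : x ∈ I.cylinder w) :
    x ∈ uIcc (I.wordMap w I.c) (I.wordMap w I.d) := by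
  obtain ⟨y, hy, rfl⟩ := hx
  exact (I.wordMap_mem_uIcc_iff w I.c_mem_attractor I.d_mem_attractor hy).2
    (Icc_subset_uIcc (I.attractor_subset hy))

theorem abs_sub_le_of_mem_cylinder (hx : x ∈ I.cylinder w) (hy : y ∈ I.cylinder w) :
    |x - y| ≤ I.ratio ^ w.length := by
  obtain ⟨x, hx, rfl⟩ := hx
  obtain ⟨y, hy, rfl⟩ := hy
  have hxI := I.attractor_subset hx
  have hyI := I.attractor_subset hy
  have hle := (I.lipschitzOnWith_wordMap w).dist_le_mul x hxI y hyI
  have hxy : |x - y| ≤ 1 :=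
    (abs_sub_le_of_le_of_le hxI.1 hxI.2 hyI.1 hyI.2).trans I.d_sub_c_lt_one.le
  rw [Real.dist_eq, Real.dist_eq, NNReal.coe_pow] at hle
  exact hle.trans (mul_le_of_le_one_right (by positivity) hxy)

theorem exists_minimal_cylinder (hx : x ∈ I.cylinder q) (hy : y ∈ I.cylinder q) (hxy : x ≠ y) :
    ∃ u, x ∈ I.cylinder (u ++ q) ∧ y ∈ I.cylinder (u ++ q) ∧
      ∀ i, ¬(x ∈ I.cylinder (i :: (u ++ q)) ∧ y ∈ I.cylinder (i :: (u ++ q))) := by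
  by_contra! hchild
  have hdeep : ∀ n : ℕ, ∃ u, u.length = n ∧ x ∈ I.cylinder (u ++ q) ∧ y ∈ I.cylinder (u ++ q) := by
    intro n
    induction n with
    | zero => exact ⟨[], rfl, hx, hy⟩
    | succ n ih =>
      obtain ⟨u, rfl, hxu, hyu⟩ := ih
      obtain ⟨i, hi⟩ := hchild u hxu hyu
      exact ⟨i :: u, rfl, hi⟩
  obtain ⟨n, hn⟩ := exists_pow_lt_of_lt_one (abs_pos.2 (sub_ne_zero.2 hxy)) I.ratio_lt_one
  obtain ⟨u, rfl, hxu, hyu⟩ := hdeep n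
  have hle := I.abs_sub_le_of_mem_cylinder hxu hyu
  rw [List.length_append] at hle
  exact hn.not_ge (hle.trans
    (pow_le_pow_of_le_one I.ratio.2 I.ratio_lt_one.le (Nat.le_add_right _ _)))

theorem exists_gap_eq (hx : x ∈ I.cylinder q) (hy : y ∈ I.cylinder q)
    (h : IsGap I.attractor x y) :
    ∃ u j, s(x, y) = s(I.gapFst (u ++ q) j, I.gapSnd (u ++ q) j) := by
  obtain ⟨u, hxu, hyu, hchild⟩ := I.exists_minimal_cylinder hx hy h.2.2.1
  obtain ⟨j, hfst, hsnd⟩ := I.exists_gap_mem_uIcc hxu hyu hchild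
  refine ⟨u, j, Sym2.eq_iff.2 ?_⟩
  have hne := I.gapFst_ne_gapSnd (u ++ q) j
  rcases h.2.2.2 _ (I.gapFst_mem_attractor _ j) hfst with e | e <;>
    rcases h.2.2.2 _ (I.gapSnd_mem_attractor _ j) hsnd with e' | e'
  · exact absurd (e.trans e'.symm) hne
  · exact Or.inl ⟨e.symm, e'.symm⟩
  · exact Or.inr ⟨e'.symm, e.symm⟩
  · exact absurd (e.trans e'.symm) hne

theorem suffix_of_sym2_eq (h : s(x, y) = s(I.gapFst w j, I.gapSnd w j)) (hx : x ∈ I.cylinder q)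
    (hy : y ∈ I.cylinder q) : q <:+ w := by
  rcases Sym2.eq_iff.1 h with ⟨rfl, rfl⟩ | ⟨rfl, rfl⟩
  · exact I.suffix_of_gap_mem_cylinder hx hy
  · exact I.suffix_of_gap_mem_cylinder hy hx

theorem gap_injective (h : s(I.gapFst w j, I.gapSnd w j) = s(I.gapFst v j', I.gapSnd v j')) :
    w = v ∧ j = j' := by
  have hwv := I.suffix_of_sym2_eq h (I.gapFst_mem_cylinder w j) (I.gapSnd_mem_cylinder w j)
  have hvw := I.suffix_of_sym2_eq h.symm (I.gapFst_mem_cylinder v j')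
    (I.gapSnd_mem_cylinder v j')
  obtain rfl : w = v := hwv.eq_of_length_le hvw.length_le
  have hfst := I.gapFst_mem_cylinder_cons w j
  have hsnd := I.gapSnd_mem_cylinder_cons w j
  rcases Sym2.eq_iff.1 h with ⟨h, -⟩ | ⟨h, h'⟩
  · have hcons : j.castSucc :: w = j'.castSucc :: w :=
      I.eq_of_mem_cylinder (by rfl) hfst (h ▸ I.gapFst_mem_cylinder_cons w j')
    exact ⟨rfl, Fin.castSucc_injective m (List.cons.inj hcons).1⟩
  · have hcons : j.castSucc :: w = j'.succ :: w :=
      I.eq_of_mem_cylinder (by rfl) hfst (h ▸ I.gapSnd_mem_cylinder_cons w j')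
    have hcons' : j.succ :: w = j'.castSucc :: w :=
      I.eq_of_mem_cylinder (by rfl) hsnd (h' ▸ I.gapFst_mem_cylinder_cons w j')
    have hj := congrArg Fin.val (List.cons.inj hcons).1
    have hj' := congrArg Fin.val (List.cons.inj hcons').1
    simp only [Fin.val_castSucc, Fin.val_succ] at hj hj'
    omega

end IntervalIFS

/-- The logarithm of the absolute slope of `f` between two distinct points `x` and `y`. -/
noncomputable def logSlope (f : ℝ → ℝ) (x y : ℝ) : ℝ :=
  Real.log |f x - f y| - Real.log |x - y|

/-- The set of all integer translates of points of `X`, that is, the preimage in `ℝ` of the image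
of `X` in the circle `ℝ / ℤ`. -/
def intTranslates (X : Set ℝ) : Set ℝ := {x | ∃ n : ℤ, x + n ∈ X}

theorem subset_intTranslates (X : Set ℝ) : X ⊆ intTranslates X := fun x hx => ⟨0, by simpa using hx⟩

theorem add_int_mem_intTranslates_iff {X : Set ℝ} {x : ℝ} (n : ℤ) :
    x + n ∈ intTranslates X ↔ x ∈ intTranslates X := by
  constructor
  · rintro ⟨k, hk⟩
    exact ⟨n + k, by rwa [Int.cast_add, ← add_assoc]⟩
  · rintro ⟨k, hk⟩
    exact ⟨k - n, by rwa [Int.cast_sub, add_add_sub_cancel]⟩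

theorem intTranslates_mono {X Y : Set ℝ} (h : X ⊆ Y) : intTranslates X ⊆ intTranslates Y :=
  fun _ ⟨n, hn⟩ => ⟨n, h hn⟩

/-- A strictly monotone bijection of `ℝ` that descends to the circle and preserves the integer
translates of `X` in both directions. -/
structure IsCircleSymmetry (X : Set ℝ) (F : ℝ → ℝ) : Prop where
  mono_or_anti : StrictMono F ∨ StrictAnti F
  surjective : Function.Surjective F
  mem_iff : ∀ x, F x ∈ intTranslates X ↔ x ∈ intTranslates X
  exists_map_add_int : ∀ n : ℤ, ∃ n' : ℤ, ∀ x, F (x + n) = F x + n'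

namespace IsCircleSymmetry

open Set

variable {X : Set ℝ} {F G : ℝ → ℝ} {x y z : ℝ}

theorem add_int (X : Set ℝ) (n : ℤ) : IsCircleSymmetry X (· + (n : ℝ)) where
  mono_or_anti := Or.inl add_left_strictMono
  surjective y := ⟨y - n, sub_add_cancel _ _⟩
  mem_iff _ := add_int_mem_intTranslates_iff n
  exists_map_add_int k := ⟨k, fun _ => add_right_comm _ _ _⟩

theorem comp (hF : IsCircleSymmetry X F) (hG : IsCircleSymmetry X G) :
    IsCircleSymmetry X (F ∘ G) where
  mono_or_anti := by
    rcases hF.mono_or_anti with hF | hF <;> rcases hG.mono_or_anti with hG | hG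
    · exact Or.inl (hF.comp hG)
    · exact Or.inr (hF.comp_strictAnti hG)
    · exact Or.inr (hF.comp_strictMono hG)
    · exact Or.inl (hF.comp hG)
  surjective := hF.surjective.comp hG.surjective
  mem_iff x := (hF.mem_iff _).trans (hG.mem_iff x)
  exists_map_add_int n := by
    obtain ⟨n', hn'⟩ := hG.exists_map_add_int n
    obtain ⟨n'', hn''⟩ := hF.exists_map_add_int n'
    exact ⟨n'', fun x => by rw [Function.comp, hn', hn'', Function.comp]⟩

theorem iterate (hF : IsCircleSymmetry X F) (n : ℕ) : IsCircleSymmetry X F^[n] := by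
  induction n with
  | zero => exact ⟨Or.inl strictMono_id, Function.surjective_id, fun _ => Iff.rfl,
      fun n => ⟨n, fun _ => rfl⟩⟩
  | succ n ih => exact Function.iterate_succ' F n ▸ hF.comp ih

theorem injective (hF : IsCircleSymmetry X F) : Function.Injective F :=
  hF.mono_or_anti.elim StrictMono.injective StrictAnti.injective

theorem mapsTo_intTranslates (hF : IsCircleSymmetry X F) {S T : Set ℝ}
    (h : ∀ x ∈ S, F x ∈ intTranslates T) : MapsTo F (intTranslates S) (intTranslates T) := by
  rintro x ⟨n, hn⟩
  obtain ⟨n', hn'⟩ := hF.exists_map_add_int n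
  rw [← add_int_mem_intTranslates_iff n', ← hn']
  exact h _ hn

theorem map_mem_uIcc_iff (hF : IsCircleSymmetry X F) : F z ∈ uIcc (F x) (F y) ↔ z ∈ uIcc x y :=
  image_mem_uIcc_iff (hF.mono_or_anti.imp (fun h => h.strictMonoOn univ)
    fun h => h.strictAntiOn univ) (mem_univ x) (mem_univ y) (mem_univ z)

theorem isGap_map_iff (hF : IsCircleSymmetry X F) :
    IsGap (intTranslates X) (F x) (F y) ↔ IsGap (intTranslates X) x y := by
  rw [IsGap, hF.surjective.forall]
  simp only [IsGap, hF.mem_iff, hF.map_mem_uIcc_iff, hF.injective.eq_iff,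
    hF.injective.ne_iff]

end IsCircleSymmetry

namespace IntervalIFS

open Set

variable {m : ℕ} (I : IntervalIFS m) {u v w q : List (Fin (m + 1))} {i i' : Fin (m + 1)}
  {j j' : Fin m} {x y z : ℝ} {F G : ℝ → ℝ}

theorem int_eq_of_abs_sub_lt {n n' : ℤ} (hx : x + n ∈ Icc I.c I.d) (hy : y + n' ∈ Icc I.c I.d)
    (hxy : |x - y| < 1 - (I.d - I.c)) : n = n' := by
  rw [abs_lt] at hxy
  have h1 : n < n' + 1 := by
    exact_mod_cast (by linarith [hx.2, hy.1] : (n : ℝ) < n' + 1)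
  have h2 : n' < n + 1 := by
    exact_mod_cast (by linarith [hx.1, hy.2] : (n' : ℝ) < n + 1)
  omega

theorem int_eq_of_add_mem {n n' : ℤ} (hn : x + n ∈ Icc I.c I.d) (hn' : x + n' ∈ Icc I.c I.d) :
    n = n' :=
  I.int_eq_of_abs_sub_lt hn hn' <| by
    rw [sub_self, abs_zero]
    exact sub_pos.2 I.d_sub_c_lt_one

theorem mem_attractor_of_mem_intTranslates (hx : x ∈ intTranslates I.attractor)
    (hxI : x ∈ Icc I.c I.d) : x ∈ I.attractor := by
  obtain ⟨n, hn⟩ := hx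
  obtain rfl : n = 0 := I.int_eq_of_add_mem (I.attractor_subset hn) (by simpa using hxI)
  simpa using hn

theorem isGap_intTranslates (h : IsGap I.attractor x y) : IsGap (intTranslates I.attractor) x y :=
  ⟨subset_intTranslates _ h.1, subset_intTranslates _ h.2.1, h.2.2.1, fun z hz hzxy =>
    h.2.2.2 z (I.mem_attractor_of_mem_intTranslates hz
      (uIcc_subset_Icc (I.attractor_subset h.1) (I.attractor_subset h.2.1) hzxy)) hzxy⟩

/-- Up to an integer translation and the order of the endpoints, `x` and `y` are the endpoints of
the gap labelled `(w, j)`. -/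
def HasGapLabel (w : List (Fin (m + 1))) (j : Fin m) (x y : ℝ) : Prop :=
  ∃ n : ℤ, s(x + n, y + n) = s(I.gapFst w j, I.gapSnd w j)

variable {I}

theorem HasGapLabel.symm (h : I.HasGapLabel w j x y) : I.HasGapLabel w j y x := by
  obtain ⟨n, h⟩ := h
  exact ⟨n, Sym2.eq_swap.trans h⟩

theorem HasGapLabel.add_int (n : ℤ) (h : I.HasGapLabel w j x y) :
    I.HasGapLabel w j (x + n) (y + n) := by
  obtain ⟨k, h⟩ := h
  exact ⟨k - n, by rwa [Int.cast_sub, add_add_sub_cancel, add_add_sub_cancel]⟩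

theorem hasGapLabel_gap (w : List (Fin (m + 1))) (j : Fin m) :
    I.HasGapLabel w j (I.gapFst w j) (I.gapSnd w j) :=
  ⟨0, by rw [Int.cast_zero, add_zero, add_zero]⟩

theorem HasGapLabel.isGap (h : I.HasGapLabel w j x y) : IsGap (intTranslates I.attractor) x y := by
  obtain ⟨n, h⟩ := h
  have hgap := I.isGap_intTranslates (I.isGap_gapFst_gapSnd w j)
  refine (IsCircleSymmetry.add_int I.attractor n).isGap_map_iff.1 ?_
  rcases Sym2.eq_iff.1 h with ⟨hx, hy⟩ | ⟨hx, hy⟩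
  · rwa [hx, hy]
  · rw [hx, hy]
    exact hgap.symm

theorem HasGapLabel.sym2_eq (h : I.HasGapLabel w j x y) {n : ℤ} (hx : x + n ∈ I.attractor) :
    s(x + n, y + n) = s(I.gapFst w j, I.gapSnd w j) := by
  obtain ⟨n', h⟩ := h
  have hn' : x + n' ∈ I.attractor := by
    rcases Sym2.eq_iff.1 h with ⟨hx, -⟩ | ⟨hx, -⟩
    · exact hx ▸ I.gapFst_mem_attractor w j
    · exact hx ▸ I.gapSnd_mem_attractor w j
  rwa [I.int_eq_of_add_mem (I.attractor_subset hx) (I.attractor_subset hn')]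

theorem HasGapLabel.suffix (h : I.HasGapLabel w j x y) {n : ℤ} (hx : x + n ∈ I.cylinder q)
    (hy : y + n ∈ I.cylinder q) : q <:+ w :=
  I.suffix_of_sym2_eq (h.sym2_eq (I.cylinder_subset_attractor q hx)) hx hy

theorem HasGapLabel.unique (h : I.HasGapLabel w j x y) (h' : I.HasGapLabel v j' x y) :
    w = v ∧ j = j' := by
  obtain ⟨n, hn⟩ := h.isGap.1
  exact I.gap_injective ((h.sym2_eq hn).symm.trans (h'.sym2_eq hn))

theorem HasGapLabel.map (hF : IsCircleSymmetry I.attractor F) (h : I.HasGapLabel w j x y)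
    (hFxy : I.HasGapLabel v j' (F x) (F y)) :
    I.HasGapLabel v j' (F (I.gapFst w j)) (F (I.gapSnd w j)) := by
  obtain ⟨n, h⟩ := h
  obtain ⟨k, hk⟩ := hF.exists_map_add_int n
  rcases Sym2.eq_iff.1 h with ⟨hx, hy⟩ | ⟨hx, hy⟩
  · rw [← hx, ← hy, hk, hk]
    exact hFxy.add_int k
  · rw [← hx, ← hy, hk, hk]
    exact hFxy.symm.add_int k

variable (I)

/-- `x` is an integer translate of an endpoint of the hull of the attractor. -/
def IsOuterEndpoint (x : ℝ) : Prop := ∃ n : ℤ, x + n = I.c ∨ x + n = I.d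

theorem isOuterEndpoint_or_hasGapLabel (h : IsGap (intTranslates I.attractor) x y) :
    I.IsOuterEndpoint x ∨ ∃ w j, I.HasGapLabel w j x y := by
  obtain ⟨n, hn⟩ := h.1
  obtain ⟨n', hn'⟩ := h.2.1
  have hx := I.attractor_subset hn
  have hy := I.attractor_subset hn'
  have hlen := I.d_sub_c_lt_one
  have houter : ∀ {e}, e ∈ I.attractor → e + (-n : ℤ) ∈ uIcc x y → e - n ≠ y →
      x + n = e := fun he hxy hne => by
    rcases h.2.2.2 _ ((add_int_mem_intTranslates_iff _).2 (subset_intTranslates _ he)) hxy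
      with h | h
    · rw [← h]; push_cast; ring
    · exact absurd (by rw [← h]; push_cast; ring) hne
  rcases lt_trichotomy n n' with hlt | rfl | hlt
  · have hle : (n : ℝ) + 1 ≤ n' := by exact_mod_cast hlt
    refine Or.inl ⟨n, Or.inl (houter I.c_mem_attractor (mem_uIcc.2 (Or.inr ?_)) ?_)⟩
    · push_cast
      constructor <;> linarith [hx.1, hy.2]
    · linarith [hx.1, hy.2]
  · right
    have hgapT := (IsCircleSymmetry.add_int I.attractor n).isGap_map_iff.2 h
    have hgap : IsGap I.attractor (x + n) (y + n) :=
      ⟨hn, hn', hgapT.2.2.1, fun z hz => hgapT.2.2.2 z (subset_intTranslates _ hz)⟩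
    obtain ⟨u, j, hu⟩ := I.exists_gap_eq (q := []) (I.cylinder_nil ▸ hn) (I.cylinder_nil ▸ hn') hgap
    exact ⟨u ++ [], j, n, hu⟩
  · have hle : (n' : ℝ) + 1 ≤ n := by exact_mod_cast hlt
    refine Or.inl ⟨n, Or.inr (houter I.d_mem_attractor (mem_uIcc.2 (Or.inl ?_)) ?_)⟩
    · push_cast
      constructor <;> linarith [hx.2, hy.1]
    · linarith [hx.2, hy.1]

/-- The log-length of the gap `(w, j)` relative to the hull, if every branch `i` were affine with
slope `exp (s i)` and the gap between the branches `j` and `j + 1` had relative length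
`exp (t j)`. -/
def formalLogLen (s : Fin (m + 1) → ℝ) (t : Fin m → ℝ) (w : List (Fin (m + 1))) (j : Fin m) : ℝ :=
  (w.map s).sum + t j

variable {s : Fin (m + 1) → ℝ} {t : Fin m → ℝ} {σ M δ κ κ' : ℝ} {p N : ℕ}

theorem formalLogLen_append (s : Fin (m + 1) → ℝ) (t : Fin m → ℝ) (u w : List (Fin (m + 1)))
    (j : Fin m) : formalLogLen s t (u ++ w) j = formalLogLen s t u j + (w.map s).sum := by
  rw [formalLogLen, formalLogLen, List.map_append, List.sum_append, add_right_comm]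

theorem sum_map_le_mul_length (hs : ∀ i, s i ≤ M) (w : List (Fin (m + 1))) :
    (w.map s).sum ≤ M * w.length := by
  have h := List.sum_le_card_nsmul (w.map s) M (List.forall_mem_map.2 fun i _ => hs i)
  rwa [List.length_map, nsmul_eq_mul, mul_comm] at h

theorem mul_length_le_sum_map (hs : ∀ i, M ≤ s i) (w : List (Fin (m + 1))) :
    M * w.length ≤ (w.map s).sum := by
  have h := List.card_nsmul_le_sum (w.map s) M (List.forall_mem_map.2 fun i _ => hs i)
  rwa [List.length_map, nsmul_eq_mul, mul_comm] at h

/-- Constants for which formal log-lengths are rigid: a difference of two changes of formal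
log-length, computed on words of length at most `p`, vanishes as soon as it is bounded by the total
error `(2 * p + 7) * δ` made when log-lengths are replaced by formal ones. -/
structure AdaptedConstants (s : Fin (m + 1) → ℝ) (t : Fin m → ℝ) (σ M δ : ℝ) (p : ℕ) : Prop where
  sigma_pos : 0 < σ
  nonneg : 0 ≤ M
  le_neg : ∀ i, s i ≤ -(2 * σ)
  abs_slope_le : ∀ i, |s i| ≤ M
  abs_gap_le : ∀ j, |t j| ≤ M
  one_le : 1 ≤ p
  le_mul : 3 * M + 4 ≤ p * σ
  pos : 0 < δ
  le_sigma : δ ≤ σ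
  le_one : δ ≤ 1
  rigid : ∀ ⦃u₁ u₂ v₁ v₂ : List (Fin (m + 1))⦄, u₁.length ≤ p → u₂.length ≤ p → v₁.length ≤ p →
    v₂.length ≤ p → ∀ ⦃j₁ j₂ i₁ i₂⦄,
    |formalLogLen s t v₁ i₁ - formalLogLen s t v₂ i₂ -
      (formalLogLen s t u₁ j₁ - formalLogLen s t u₂ j₂)| ≤ (2 * p + 7) * δ →
    formalLogLen s t v₁ i₁ - formalLogLen s t v₂ i₂ =
      formalLogLen s t u₁ j₁ - formalLogLen s t u₂ j₂

theorem exists_pos_forall_abs_lt_imp_eq_zero {V : Set ℝ} (hV : V.Finite) :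
    ∃ τ > 0, ∀ x ∈ V, |x| < τ → x = 0 := by
  have hclosed : IsClosed (V \ {0}) := (hV.subset sdiff_subset).isClosed
  obtain ⟨τ, hτ, hball⟩ := Metric.isOpen_iff.1 hclosed.isOpen_compl 0 fun h => h.2 rfl
  refine ⟨τ, hτ, fun x hx hxτ => ?_⟩
  by_contra hx0
  exact hball (by rwa [Metric.mem_ball, dist_zero_right]) ⟨hx, hx0⟩

open Pointwise in
theorem exists_pos_forall_formalLogLen_eq (s : Fin (m + 1) → ℝ) (t : Fin m → ℝ) (p : ℕ) :
    ∃ τ > 0, ∀ ⦃u₁ u₂ v₁ v₂ : List (Fin (m + 1))⦄, u₁.length ≤ p → u₂.length ≤ p →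
      v₁.length ≤ p → v₂.length ≤ p → ∀ ⦃j₁ j₂ i₁ i₂⦄,
      |formalLogLen s t v₁ i₁ - formalLogLen s t v₂ i₂ -
        (formalLogLen s t u₁ j₁ - formalLogLen s t u₂ j₂)| < τ →
      formalLogLen s t v₁ i₁ - formalLogLen s t v₂ i₂ =
        formalLogLen s t u₁ j₁ - formalLogLen s t u₂ j₂ := by
  set V := image2 (formalLogLen s t) {u | u.length ≤ p} univ
  have hV : V.Finite := (List.finite_length_le _ p).image2 _ finite_univ
  have hmem : ∀ {u : List (Fin (m + 1))} j, u.length ≤ p → formalLogLen s t u j ∈ V :=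
    fun j hu => mem_image2_of_mem hu (mem_univ j)
  obtain ⟨τ, hτ, h⟩ := exists_pos_forall_abs_lt_imp_eq_zero ((hV.sub hV).sub (hV.sub hV))
  exact ⟨τ, hτ, fun u₁ u₂ v₁ v₂ hu₁ hu₂ hv₁ hv₂ j₁ j₂ i₁ i₂ hlt => sub_eq_zero.1 <| h _
    (sub_mem_sub (sub_mem_sub (hmem i₁ hv₁) (hmem i₂ hv₂))
      (sub_mem_sub (hmem j₁ hu₁) (hmem j₂ hu₂))) hlt⟩

theorem exists_adaptedConstants (hs : ∀ i, s i < 0) (t : Fin m → ℝ) :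
    ∃ σ M δ p, AdaptedConstants s t σ M δ p := by
  obtain ⟨i₀, hi₀⟩ := Finite.exists_max s
  set σ := -(s i₀) / 2
  have hσ : 0 < σ := half_pos (neg_pos.2 (hs i₀))
  set M := ∑ i, |s i| + ∑ j, |t j|
  have hMs : ∀ i, |s i| ≤ M := fun i =>
    (Finset.single_le_sum (fun i _ => abs_nonneg (s i)) (Finset.mem_univ i)).trans
      (le_add_of_nonneg_right (by positivity))
  have hMt : ∀ j, |t j| ≤ M := fun j =>
    (Finset.single_le_sum (fun j _ => abs_nonneg (t j)) (Finset.mem_univ j)).trans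
      (le_add_of_nonneg_left (by positivity))
  obtain ⟨p, hp⟩ := exists_nat_ge (max 1 ((3 * M + 4) / σ))
  obtain ⟨τ, hτ, hrigid⟩ := exists_pos_forall_formalLogLen_eq s t p
  set δ := min (min σ 1) (τ / (2 * p + 8))
  have hδ : 0 < δ := by positivity
  have hδτ : (2 * p + 7) * δ < τ := by
    have hle : δ * (2 * p + 8) ≤ τ := (le_div_iff₀ (by positivity)).1 (min_le_right _ _)
    linarith
  refine ⟨σ, M, δ, p, hσ, by positivity, fun i => ?_, hMs, hMt,
    by exact_mod_cast (le_max_left _ _).trans hp, (div_le_iff₀ hσ).1 ((le_max_right _ _).trans hp),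
    hδ, (min_le_left _ _).trans (min_le_left _ _), (min_le_left _ _).trans (min_le_right _ _),
    fun u₁ u₂ v₁ v₂ hu₁ hu₂ hv₁ hv₂ j₁ j₂ i₁ i₂ h => hrigid hu₁ hu₂ hv₁ hv₂ (h.trans_lt hδτ)⟩
  rw [mul_div_cancel₀ _ two_ne_zero, neg_neg]
  exact hi₀ i

/-- The log-length of the hull of the cylinder `w`. -/
noncomputable def logLen (w : List (Fin (m + 1))) : ℝ :=
  Real.log |I.wordMap w I.c - I.wordMap w I.d|

/-- Up to an error `δ` at each step, the `i`-th branch contracts the hulls of cylinders by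
`exp (s i)` and the gap `(w, j)` occupies a proportion `exp (t j)` of the hull of the cylinder
`w`. -/
structure IsNearlyAffine (s : Fin (m + 1) → ℝ) (t : Fin m → ℝ) (δ : ℝ) : Prop where
  logLen_cons : ∀ i w, |I.logLen (i :: w) - I.logLen w - s i| ≤ δ
  log_gap : ∀ w j, |Real.log |I.gapFst w j - I.gapSnd w j| - I.logLen w - t j| ≤ δ

variable {I}

theorem log_abs_sub_le_logLen (hx : x ∈ I.cylinder w) (hy : y ∈ I.cylinder w) (hxy : x ≠ y) :
    Real.log |x - y| ≤ I.logLen w :=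
  Real.log_le_log (abs_pos.2 (sub_ne_zero.2 hxy)) <| abs_sub_comm x y ▸
    (abs_sub_le_of_uIcc_subset_uIcc
      (uIcc_subset_uIcc (I.mem_uIcc_of_mem_cylinder hx) (I.mem_uIcc_of_mem_cylinder hy))).trans_eq
      (abs_sub_comm _ _)

namespace IsNearlyAffine

theorem logLen_append (hI : I.IsNearlyAffine s t δ) (u w : List (Fin (m + 1))) :
    |I.logLen (u ++ w) - I.logLen w - (u.map s).sum| ≤ δ * u.length := by
  induction u with
  | nil => simp
  | cons i u ih =>
    have hi := hI.logLen_cons i (u ++ w)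
    rw [List.cons_append, List.map_cons, List.sum_cons, List.length_cons, Nat.cast_succ]
    rw [abs_le] at *
    constructor <;> linarith

theorem log_gap_append (hI : I.IsNearlyAffine s t δ) (u w : List (Fin (m + 1))) (j : Fin m) :
    |Real.log |I.gapFst (u ++ w) j - I.gapSnd (u ++ w) j| - I.logLen w - formalLogLen s t u j| ≤
      δ * (u.length + 1) := by
  have hlen := hI.logLen_append u w
  have hgap := hI.log_gap (u ++ w) j
  rw [formalLogLen]
  rw [abs_le] at *
  constructor <;> linarith

theorem logLen_append_le (hI : I.IsNearlyAffine s t δ) (hC : AdaptedConstants s t σ M δ p)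
    (u w : List (Fin (m + 1))) : I.logLen (u ++ w) ≤ I.logLen w - σ * u.length := by
  have hlen := (abs_le.1 (hI.logLen_append u w)).2
  have hsum := sum_map_le_mul_length hC.le_neg u
  have hδ := mul_le_mul_of_nonneg_right hC.le_sigma u.length.cast_nonneg
  linarith

end IsNearlyAffine

variable (I)

/-- Modulo integer translations, `G` maps the cylinder `v` into the cylinder `q`. -/
def MapsCylinder (G : ℝ → ℝ) (v q : List (Fin (m + 1))) : Prop :=
  ∃ n : ℤ, ∀ x ∈ I.cylinder v, G x + n ∈ I.cylinder q

/-- `F` maps each cylinder of depth at least `N` into a single translate of the attractor, with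
logarithmic distortion at most `δ`. -/
structure HasSmallDistortion (F : ℝ → ℝ) (N : ℕ) (δ : ℝ) : Prop where
  mapsCylinder : ∀ w : List (Fin (m + 1)), N ≤ w.length → I.MapsCylinder F w []
  distortion : ∀ ⦃w : List (Fin (m + 1))⦄, N ≤ w.length → ∀ ⦃x⦄, x ∈ I.cylinder w →
    ∀ ⦃y⦄, y ∈ I.cylinder w → ∀ ⦃x'⦄, x' ∈ I.cylinder w → ∀ ⦃y'⦄, y' ∈ I.cylinder w →
    x ≠ y → x' ≠ y' → |logSlope F x y - logSlope F x' y'| ≤ δ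

variable {I}

theorem HasGapLabel.log_abs_sub_eq (h : I.HasGapLabel w j x y) :
    Real.log |x - y| = Real.log |I.gapFst w j - I.gapSnd w j| := by
  obtain ⟨n, h⟩ := h
  rcases Sym2.eq_iff.1 h with ⟨hx, hy⟩ | ⟨hx, hy⟩
  · rw [← hx, ← hy, add_sub_add_right_eq_sub]
  · rw [← hx, ← hy, add_sub_add_right_eq_sub, abs_sub_comm]

theorem MapsCylinder.exists_hasGapLabel (hF : IsCircleSymmetry I.attractor F)
    (hFw : I.MapsCylinder F w q) (u : List (Fin (m + 1))) (j : Fin m) :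
    ∃ w' j', I.HasGapLabel w' j' (F (I.gapFst (u ++ w) j)) (F (I.gapSnd (u ++ w) j)) := by
  obtain ⟨n, hn⟩ := hFw
  have hgap := ((IsCircleSymmetry.add_int I.attractor n).comp hF).isGap_map_iff.2
    (I.isGap_intTranslates (I.isGap_gapFst_gapSnd (u ++ w) j))
  have hfst := hn _ (I.cylinder_append_subset u w (I.gapFst_mem_cylinder (u ++ w) j))
  have hsnd := hn _ (I.cylinder_append_subset u w (I.gapSnd_mem_cylinder (u ++ w) j))
  obtain ⟨v, j', h⟩ := I.exists_gap_eq hfst hsnd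
    ⟨I.cylinder_subset_attractor q hfst, I.cylinder_subset_attractor q hsnd, hgap.2.2.1,
      fun z hz => hgap.2.2.2 z (subset_intTranslates _ hz)⟩
  exact ⟨v ++ q, j', n, h⟩

theorem MapsCylinder.suffix (hFw : I.MapsCylinder F w q)
    (h : I.HasGapLabel v j' (F (I.gapFst (u ++ w) j)) (F (I.gapSnd (u ++ w) j))) : q <:+ v := by
  obtain ⟨n, hn⟩ := hFw
  exact h.suffix (hn _ (I.cylinder_append_subset u w (I.gapFst_mem_cylinder _ j)))
    (hn _ (I.cylinder_append_subset u w (I.gapSnd_mem_cylinder _ j)))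

theorem MapsCylinder.exists_logLen_le (hF : IsCircleSymmetry I.attractor F)
    (hC : AdaptedConstants s t σ M δ p) (hI : I.IsNearlyAffine s t δ)
    (hFw : I.MapsCylinder F w []) :
    ∃ q, I.MapsCylinder F w q ∧
      I.logLen q - M - δ ≤ Real.log |F (I.wordMap w I.c) - F (I.wordMap w I.d)| := by
  obtain ⟨n, hn⟩ := hFw
  have hFn := (IsCircleSymmetry.add_int I.attractor n).comp hF
  obtain ⟨q, hc, hd, hchild⟩ := I.exists_minimal_cylinder
    (hn _ (mem_image_of_mem _ I.c_mem_attractor)) (hn _ (mem_image_of_mem _ I.d_mem_attractor))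
    (hFn.injective.ne (I.wordMap_left_ne_right w))
  rw [List.append_nil] at hc hd hchild
  refine ⟨q, ⟨n, fun x hx => I.mem_cylinder_of_mem_uIcc hc hd (I.cylinder_nil ▸ hn x hx)
    (hFn.map_mem_uIcc_iff.2 (I.mem_uIcc_of_mem_cylinder hx))⟩, ?_⟩
  obtain ⟨j, hfst, hsnd⟩ := I.exists_gap_mem_uIcc hc hd hchild
  have hle := abs_sub_le_of_uIcc_subset_uIcc (uIcc_subset_uIcc hfst hsnd)
  rw [add_sub_add_right_eq_sub, abs_sub_comm, abs_sub_comm (F (I.wordMap w I.d))] at hle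
  have hlog := Real.log_le_log (abs_pos.2 (sub_ne_zero.2 (I.gapFst_ne_gapSnd q j))) hle
  have hgap := (abs_le.1 (hI.log_gap q j)).1
  have ht := (abs_le.1 (hC.abs_gap_le j)).1
  linarith

theorem AdaptedConstants.neg_two_mul_le (hC : AdaptedConstants s t σ M δ p) (hu : u.length ≤ 1)
    (j : Fin m) : -(2 * M) ≤ formalLogLen s t u j := by
  have hsum := mul_length_le_sum_map (fun i => (abs_le.1 (hC.abs_slope_le i)).1) u
  have ht := (abs_le.1 (hC.abs_gap_le j)).1
  have hlen := mul_le_mul_of_nonneg_left (Nat.cast_le_one.2 hu : (u.length : ℝ) ≤ 1) hC.nonneg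
  rw [formalLogLen]
  linarith

theorem exists_append_of_hasGapLabel_map (hC : AdaptedConstants s t σ M δ p)
    (hI : I.IsNearlyAffine s t δ) (hS : I.HasSmallDistortion F N δ) (hw : N ≤ w.length)
    (hFw : I.MapsCylinder F w q)
    (hq : I.logLen q - M - δ ≤ Real.log |F (I.wordMap w I.c) - F (I.wordMap w I.d)|)
    (hu : u.length ≤ 1) {w' : List (Fin (m + 1))}
    (h : I.HasGapLabel w' j' (F (I.gapFst (u ++ w) j)) (F (I.gapSnd (u ++ w) j))) :
    ∃ v, w' = v ++ q ∧ v.length ≤ p ∧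
      |Real.log |F (I.gapFst (u ++ w) j) - F (I.gapSnd (u ++ w) j)| - I.logLen q -
        formalLogLen s t v j'| ≤ δ * (p + 1) := by
  obtain ⟨v, rfl⟩ := hFw.suffix h
  have hu' : (u.length : ℝ) ≤ 1 := Nat.cast_le_one.2 hu
  have hdist := (abs_le.1 (hS.distortion hw
    (I.cylinder_append_subset u w (I.gapFst_mem_cylinder _ j))
    (I.cylinder_append_subset u w (I.gapSnd_mem_cylinder _ j))
    (mem_image_of_mem _ I.c_mem_attractor) (mem_image_of_mem _ I.d_mem_attractor)
    (I.gapFst_ne_gapSnd _ j) (I.wordMap_left_ne_right w))).1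
  rw [logSlope, logSlope, h.log_abs_sub_eq, ← logLen] at hdist
  have hgap := (abs_le.1 (hI.log_gap_append u w j)).1
  have hL := hC.neg_two_mul_le hu j
  have hv := (log_abs_sub_le_logLen (I.gapFst_mem_cylinder (v ++ q) j')
    (I.gapSnd_mem_cylinder (v ++ q) j') (I.gapFst_ne_gapSnd _ _)).trans
    (hI.logLen_append_le hC v q)
  have hδu : δ * (u.length + 1) ≤ 2 * δ := by nlinarith [hC.pos]
  have hvp : v.length ≤ p := by
    have hσ : (v.length : ℝ) * σ ≤ p * σ := by linarith [hC.le_mul, hC.le_one]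
    exact_mod_cast le_of_mul_le_mul_right hσ hC.sigma_pos
  refine ⟨v, rfl, hvp, ?_⟩
  rw [h.log_abs_sub_eq]
  exact (hI.log_gap_append v q j').trans
    (mul_le_mul_of_nonneg_left (by gcongr) hC.pos.le)

theorem formalLogLen_sub_eq_of_length_le_one (hF : IsCircleSymmetry I.attractor F)
    (hC : AdaptedConstants s t σ M δ p) (hI : I.IsNearlyAffine s t δ)
    (hS : I.HasSmallDistortion F N δ) (hw : N ≤ w.length) {u₁ u₂ w₁ w₂ : List (Fin (m + 1))}
    {j₁ j₂ i₁ i₂ : Fin m} (hu₁ : u₁.length ≤ 1) (hu₂ : u₂.length ≤ 1)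
    (h₁ : I.HasGapLabel w₁ i₁ (F (I.gapFst (u₁ ++ w) j₁)) (F (I.gapSnd (u₁ ++ w) j₁)))
    (h₂ : I.HasGapLabel w₂ i₂ (F (I.gapFst (u₂ ++ w) j₂)) (F (I.gapSnd (u₂ ++ w) j₂))) :
    formalLogLen s t w₁ i₁ - formalLogLen s t (u₁ ++ w) j₁ =
      formalLogLen s t w₂ i₂ - formalLogLen s t (u₂ ++ w) j₂ := by
  obtain ⟨q, hFq, hq⟩ := (hS.mapsCylinder w hw).exists_logLen_le hF hC hI
  obtain ⟨v₁, rfl, hv₁, hlen₁⟩ := exists_append_of_hasGapLabel_map hC hI hS hw hFq hq hu₁ h₁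
  obtain ⟨v₂, rfl, hv₂, hlen₂⟩ := exists_append_of_hasGapLabel_map hC hI hS hw hFq hq hu₂ h₂
  have hdist := hS.distortion hw
    (I.cylinder_append_subset u₁ w (I.gapFst_mem_cylinder _ j₁))
    (I.cylinder_append_subset u₁ w (I.gapSnd_mem_cylinder _ j₁))
    (I.cylinder_append_subset u₂ w (I.gapFst_mem_cylinder _ j₂))
    (I.cylinder_append_subset u₂ w (I.gapSnd_mem_cylinder _ j₂))
    (I.gapFst_ne_gapSnd _ _) (I.gapFst_ne_gapSnd _ _)
  rw [logSlope, logSlope] at hdist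
  have hgap : ∀ {u : List (Fin (m + 1))} j, u.length ≤ 1 →
      |Real.log |I.gapFst (u ++ w) j - I.gapSnd (u ++ w) j| - I.logLen w -
        formalLogLen s t u j| ≤ δ * 2 := fun {u} j hu => by
    refine (hI.log_gap_append u w j).trans (mul_le_mul_of_nonneg_left ?_ hC.pos.le)
    linarith [(Nat.cast_le_one.2 hu : (u.length : ℝ) ≤ 1)]
  have hgap₁ := hgap j₁ hu₁
  have hgap₂ := hgap j₂ hu₂
  have hrigid := hC.rigid (hu₁.trans hC.one_le) (hu₂.trans hC.one_le) hv₁ hv₂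
    (j₁ := j₁) (j₂ := j₂) (i₁ := i₁) (i₂ := i₂) (by
      rw [abs_le] at *
      constructor <;> linarith)
  simp only [formalLogLen_append]
  linarith

/-- `G` changes by `κ` the formal log-length of every gap inside the cylinder `v` whose image has
a label. -/
def HasLabelShift (I : IntervalIFS m) (s : Fin (m + 1) → ℝ) (t : Fin m → ℝ) (G : ℝ → ℝ)
    (v : List (Fin (m + 1))) (κ : ℝ) : Prop :=
  ∀ u j w' j', I.HasGapLabel w' j' (G (I.gapFst (u ++ v) j)) (G (I.gapSnd (u ++ v) j)) →
    formalLogLen s t w' j' = formalLogLen s t (u ++ v) j + κ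

theorem exists_hasLabelShift [NeZero m] (hF : IsCircleSymmetry I.attractor F)
    (hC : AdaptedConstants s t σ M δ p) (hI : I.IsNearlyAffine s t δ)
    (hS : I.HasSmallDistortion F N δ) (hw : N ≤ w.length) : ∃ κ, I.HasLabelShift s t F w κ := by
  obtain ⟨w₀, j₀, h₀⟩ := (hS.mapsCylinder w hw).exists_hasGapLabel hF [] 0
  refine ⟨formalLogLen s t w₀ j₀ - formalLogLen s t w 0, fun u => ?_⟩
  induction u with
  | nil =>
    intro j w' j' h
    have heq := formalLogLen_sub_eq_of_length_le_one hF hC hI hS hw (u₁ := []) (u₂ := [])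
      zero_le_one zero_le_one h h₀
    rw [List.nil_append] at heq
    exact sub_eq_iff_eq_add'.1 heq
  | cons i u ih =>
    intro j w' j' h
    have huw : N ≤ (u ++ w).length := by rw [List.length_append]; omega
    obtain ⟨w₁, j₁, h₁⟩ := (hS.mapsCylinder w hw).exists_hasGapLabel hF u 0
    have heq := formalLogLen_sub_eq_of_length_le_one hF hC hI hS huw (u₁ := [i]) (u₂ := [])
      le_rfl zero_le_one h h₁
    have hu := ih 0 w₁ j₁ h₁
    rw [List.nil_append] at heq
    rw [List.cons_append]
    rw [List.singleton_append] at heq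
    linarith

variable (I) in
/-- Every forward orbit in the integer translates of the attractor visits every cylinder, that is,
it is dense in the attractor modulo `1`. -/
def HasDenseOrbits (F : ℝ → ℝ) : Prop :=
  ∀ x ∈ intTranslates I.attractor, ∀ w, ∃ n : ℕ, F^[n] x ∈ intTranslates (I.cylinder w)

theorem mem_intTranslates_attractor (hx : x ∈ intTranslates (I.cylinder w)) :
    x ∈ intTranslates I.attractor :=
  intTranslates_mono (I.cylinder_subset_attractor w) hx

theorem eq_of_mem_intTranslates_cylinder (hlen : w.length = v.length)
    (hw : x ∈ intTranslates (I.cylinder w)) (hv : x ∈ intTranslates (I.cylinder v)) : w = v := by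
  obtain ⟨n, hn⟩ := hw
  obtain ⟨n', hn'⟩ := hv
  obtain rfl : n = n' := I.int_eq_of_add_mem
    (I.attractor_subset (I.cylinder_subset_attractor w hn))
    (I.attractor_subset (I.cylinder_subset_attractor v hn'))
  exact I.eq_of_mem_cylinder hlen hn hn'

theorem MapsCylinder.mapsTo (hF : IsCircleSymmetry I.attractor F) (h : I.MapsCylinder F v q) :
    MapsTo F (intTranslates (I.cylinder v)) (intTranslates (I.cylinder q)) := by
  obtain ⟨n, hn⟩ := h
  exact hF.mapsTo_intTranslates fun x hx => ⟨n, hn x hx⟩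

theorem MapsCylinder.comp (hF : IsCircleSymmetry I.attractor F) (hFq : I.MapsCylinder F q w)
    (hGv : I.MapsCylinder G v q) : I.MapsCylinder (F ∘ G) v w := by
  obtain ⟨k, hk⟩ := hFq
  obtain ⟨n, hn⟩ := hGv
  obtain ⟨n', hn'⟩ := hF.exists_map_add_int n
  refine ⟨n' + k, fun x hx => ?_⟩
  rw [Int.cast_add, ← add_assoc, Function.comp, ← hn']
  exact hk _ (hn x hx)

namespace HasDenseOrbits

theorem exists_ge (hF : IsCircleSymmetry I.attractor F) (hD : I.HasDenseOrbits F)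
    (hx : x ∈ intTranslates I.attractor) (w : List (Fin (m + 1))) (N : ℕ) :
    ∃ n ≥ N, F^[n] x ∈ intTranslates (I.cylinder w) := by
  obtain ⟨n, hn⟩ := hD _ (((hF.iterate N).mem_iff x).2 hx) w
  exact ⟨n + N, Nat.le_add_left N n, by rwa [Function.iterate_add_apply]⟩

/- Otherwise an orbit would eventually visit at most `r` cylinders of depth `r`, but there are at
least `2 ^ r` of them. -/
theorem exists_not_mapsTo_iterate [NeZero m] (hF : IsCircleSymmetry I.attractor F)
    (hD : I.HasDenseOrbits F) {T : Set ℝ} (hxT : x ∈ T) (hx : x ∈ intTranslates I.attractor)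
    {r : ℕ} (hr : 0 < r) (hT : MapsTo F^[r] T T) (N : ℕ) :
    ∃ n ≥ N, ∀ w : List (Fin (m + 1)), w.length = r →
      ¬MapsTo F^[n] T (intTranslates (I.cylinder w)) := by
  by_contra! hmaps
  choose! Q hlen hQ using hmaps
  let Q' (s : Fin r) : List.Vector (Fin (m + 1)) r :=
    ⟨Q (N + s), hlen _ (Nat.le_add_right N s)⟩
  have hsurj : Function.Surjective Q' := by
    rintro ⟨w, hw⟩
    obtain ⟨n, hn, hxw⟩ := hD.exists_ge hF hx w N
    have hs := Nat.mod_lt (n - N) hr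
    refine ⟨⟨(n - N) % r, hs⟩, Subtype.ext ?_⟩
    have hT' : F^[r * ((n - N) / r)] x ∈ T := by
      rw [Function.iterate_mul]
      exact hT.iterate _ hxT
    have hxQ := hQ (N + (n - N) % r) (Nat.le_add_right _ _) hT'
    rw [← Function.iterate_add_apply, add_assoc, Nat.mod_add_div, Nat.add_sub_cancel' hn] at hxQ
    exact eq_of_mem_intTranslates_cylinder ((hlen _ (Nat.le_add_right _ _)).trans hw.symm) hxQ hxw
  have hcard := Fintype.card_le_of_surjective _ hsurj
  rw [card_vector, Fintype.card_fin, Fintype.card_fin] at hcard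
  have hm : 2 ≤ m + 1 := Nat.succ_le_succ (NeZero.pos m)
  exact (hcard.trans_lt r.lt_two_pow_self).not_ge (Nat.pow_le_pow_left hm r)

theorem iterate_notMem_intTranslates [NeZero m] (hF : IsCircleSymmetry I.attractor F)
    (hD : I.HasDenseOrbits F) (hx : x ∈ intTranslates I.attractor) {i i' : ℕ} (hi : i < i') :
    F^[i'] x ∉ intTranslates {F^[i] x} := by
  intro h
  rw [← Nat.sub_add_cancel hi.le, Function.iterate_add_apply] at h
  set y := F^[i] x
  have hy : y ∈ intTranslates I.attractor := ((hF.iterate i).mem_iff x).2 hx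
  have hT : MapsTo F^[i' - i] (intTranslates {y}) (intTranslates {y}) :=
    (hF.iterate _).mapsTo_intTranslates fun z hz => by rwa [eq_of_mem_singleton hz]
  obtain ⟨n, -, hn⟩ := hD.exists_not_mapsTo_iterate hF
    (subset_intTranslates _ (mem_singleton y)) hy (Nat.sub_pos_of_lt hi) hT 0
  obtain ⟨k, hk⟩ := ((hF.iterate n).mem_iff y).2 hy
  obtain ⟨w, hw, hkw⟩ := I.exists_mem_cylinder (i' - i) hk
  exact hn w hw ((hF.iterate n).mapsTo_intTranslates fun z hz => ⟨k, by
    rwa [eq_of_mem_singleton hz]⟩)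

theorem eventually_iterate_notMem [NeZero m] (hF : IsCircleSymmetry I.attractor F)
    (hD : I.HasDenseOrbits F) (hx : x ∈ intTranslates I.attractor) {P : Set ℝ} (hP : P.Finite) :
    ∀ᶠ i : ℕ in Filter.atTop, F^[i] x ∉ intTranslates P := by
  have hpoint : ∀ z ∈ P, ∀ᶠ i : ℕ in Filter.atTop, F^[i] x ∉ intTranslates {z} := by
    intro z _
    have hsub : {i : ℕ | F^[i] x ∈ intTranslates {z}}.Subsingleton := by
      intro i hi i' hi'
      wlog hii : i < i' generalizing i i'
      · exact (not_lt.1 hii).eq_or_lt.elim Eq.symm fun h => (this hi' hi h).symm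
      obtain ⟨n, hn⟩ := hi
      obtain ⟨n', hn'⟩ := hi'
      refine absurd ⟨n' - n, ?_⟩ (hD.iterate_notMem_intTranslates hF hx hii)
      rw [mem_singleton_iff] at *
      rw [Int.cast_sub]
      linarith
    rw [← Nat.cofinite_eq_atTop]
    exact hsub.finite.eventually_cofinite_notMem
  filter_upwards [hP.eventually_all.2 hpoint] with i hi ⟨n, hn⟩
  exact hi _ hn ⟨n, rfl⟩

theorem eventually_hasGapLabel [NeZero m] (hF : IsCircleSymmetry I.attractor F)
    (hD : I.HasDenseOrbits F) (hC : AdaptedConstants s t σ M δ p)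
    (hxy : IsGap (intTranslates I.attractor) x y) (H : ℝ) :
    ∀ᶠ i : ℕ in Filter.atTop,
      ∃ w j, I.HasGapLabel w j (F^[i] x) (F^[i] y) ∧ formalLogLen s t w j < H := by
  obtain ⟨B, hB⟩ := exists_nat_gt ((M - H) / (2 * σ))
  have hσ := hC.sigma_pos
  rw [div_lt_iff₀ (by positivity)] at hB
  have hfin : ({I.c, I.d} ∪ ⋃ w ∈ {w : List (Fin (m + 1)) | w.length ≤ B},
      (range (I.gapFst w) ∪ range (I.gapSnd w))).Finite :=
    (toFinite _).union ((List.finite_length_le _ B).biUnion fun w _ =>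
      (finite_range _).union (finite_range _))
  filter_upwards [hD.eventually_iterate_notMem hF hxy.1 hfin] with i hi
  rcases I.isOuterEndpoint_or_hasGapLabel ((hF.iterate i).isGap_map_iff.2 hxy) with
    ⟨n, hn⟩ | ⟨w, j, hwj⟩
  · exact absurd ⟨n, Or.inl hn⟩ hi
  · refine ⟨w, j, hwj, ?_⟩
    have hw : B < w.length := by
      by_contra! hw
      obtain ⟨n, hn⟩ := hwj
      refine hi ⟨n, Or.inr (mem_biUnion (x := w) hw ?_)⟩
      rcases Sym2.eq_iff.1 hn with ⟨hn, -⟩ | ⟨hn, -⟩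
      · exact Or.inl ⟨j, hn.symm⟩
      · exact Or.inr ⟨j, hn.symm⟩
    have hsum := sum_map_le_mul_length hC.le_neg w
    have ht := (abs_le.1 (hC.abs_gap_le j)).2
    have hlen := mul_le_mul_of_nonneg_left (Nat.cast_le.2 hw.le : (B : ℝ) ≤ w.length) hσ.le
    rw [formalLogLen]
    linarith

theorem exists_forall_hasGapLabel [NeZero m] (hF : IsCircleSymmetry I.attractor F)
    (hD : I.HasDenseOrbits F) (hC : AdaptedConstants s t σ M δ p) (H : ℝ) :
    ∃ v j, ∀ i, ∃ w j', I.HasGapLabel w j' (F^[i] (I.gapFst v j)) (F^[i] (I.gapSnd v j)) ∧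
      formalLogLen s t w j' < H := by
  obtain ⟨n, hn⟩ := Filter.eventually_atTop.1
    (hD.eventually_hasGapLabel hF hC (I.isGap_intTranslates (I.isGap_gapFst_gapSnd [] 0)) H)
  obtain ⟨v, j, hv, -⟩ := hn n le_rfl
  refine ⟨v, j, fun i => ?_⟩
  obtain ⟨w, j', hw, hlt⟩ := hn (i + n) (Nat.le_add_left n i)
  rw [Function.iterate_add_apply, Function.iterate_add_apply] at hw
  exact ⟨w, j', hv.map (hF.iterate i) hw, hlt⟩

end HasDenseOrbits

theorem AdaptedConstants.le_length (hC : AdaptedConstants s t σ M δ p) {D : ℕ}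
    (h : formalLogLen s t w j < -(M * (D + 1))) : D ≤ w.length := by
  by_contra! hD
  have hsum := mul_length_le_sum_map (fun i => (abs_le.1 (hC.abs_slope_le i)).1) w
  have ht := (abs_le.1 (hC.abs_gap_le j)).1
  have hlen := mul_le_mul_of_nonneg_left (Nat.cast_le.2 hD.le : (w.length : ℝ) ≤ D) hC.nonneg
  rw [formalLogLen] at h
  linarith

theorem AdaptedConstants.formalLogLen_append_le (hC : AdaptedConstants s t σ M δ p)
    (u v : List (Fin (m + 1))) (j j' : Fin m) :
    formalLogLen s t (u ++ v) j ≤ formalLogLen s t v j' + 2 * M := by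
  have hsum := sum_map_le_mul_length hC.le_neg u
  have hu : 0 ≤ σ * u.length := mul_nonneg hC.sigma_pos.le u.length.cast_nonneg
  have hj := (abs_le.1 (hC.abs_gap_le j)).2
  have hj' := (abs_le.1 (hC.abs_gap_le j')).1
  rw [formalLogLen_append, formalLogLen, formalLogLen]
  linarith

theorem exists_hasGapLabel_map_of_mem_uIcc (hG : IsCircleSymmetry I.attractor G) {n : ℤ}
    (hfst : I.gapFst q j ∈ uIcc (G (I.wordMap v I.c) + n) (G (I.wordMap v I.d) + n))
    (hsnd : I.gapSnd q j ∈ uIcc (G (I.wordMap v I.c) + n) (G (I.wordMap v I.d) + n)) :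
    ∃ u j', I.HasGapLabel q j (G (I.gapFst (u ++ v) j')) (G (I.gapSnd (u ++ v) j')) := by
  have hGn := (IsCircleSymmetry.add_int I.attractor n).comp hG
  obtain ⟨x, hx⟩ := hGn.surjective (I.gapFst q j)
  obtain ⟨y, hy⟩ := hGn.surjective (I.gapSnd q j)
  have hgap : IsGap (intTranslates I.attractor) x y := hGn.isGap_map_iff.1 <| by
    rw [hx, hy]
    exact I.isGap_intTranslates (I.isGap_gapFst_gapSnd q j)
  rw [← hx] at hfst
  rw [← hy] at hsnd
  have hmem : ∀ {z}, z ∈ intTranslates I.attractor →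
      z ∈ uIcc (I.wordMap v I.c) (I.wordMap v I.d) → z ∈ I.cylinder v := fun hz hzv =>
    I.mem_cylinder_of_mem_uIcc (mem_image_of_mem _ I.c_mem_attractor)
      (mem_image_of_mem _ I.d_mem_attractor) (I.mem_attractor_of_mem_intTranslates hz
        (uIcc_subset_Icc (I.mapsTo_wordMap v I.left_mem) (I.mapsTo_wordMap v I.right_mem) hzv)) hzv
  have hxv := hmem hgap.1 (hGn.map_mem_uIcc_iff.1 hfst)
  have hyv := hmem hgap.2.1 (hGn.map_mem_uIcc_iff.1 hsnd)
  obtain ⟨u, j', h⟩ := I.exists_gap_eq hxv hyv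
    ⟨I.cylinder_subset_attractor v hxv, I.cylinder_subset_attractor v hyv, hgap.2.2.1,
      fun z hz => hgap.2.2.2 z (subset_intTranslates _ hz)⟩
  have hlabel : I.HasGapLabel (u ++ v) j' x y := ⟨0, by rwa [Int.cast_zero, add_zero, add_zero]⟩
  exact ⟨u, j', hlabel.map hG ⟨n, by rw [← hx, ← hy]; rfl⟩⟩

theorem MapsCylinder.exists_length_eq (hG : IsCircleSymmetry I.attractor G)
    (hGv : I.MapsCylinder G v []) {D : ℕ}
    (hdeep : ∀ u j w j', I.HasGapLabel w j' (G (I.gapFst (u ++ v) j)) (G (I.gapSnd (u ++ v) j)) →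
      D ≤ w.length) : ∃ q, q.length = D ∧ I.MapsCylinder G v q := by
  induction D with
  | zero => exact ⟨[], rfl, hGv⟩
  | succ D ih =>
    obtain ⟨q, rfl, n, hn⟩ := ih fun u j w j' h => (Nat.le_succ _).trans (hdeep u j w j' h)
    have hc := hn _ (mem_image_of_mem _ I.c_mem_attractor)
    have hd := hn _ (mem_image_of_mem _ I.d_mem_attractor)
    by_cases hchild : ∃ i, G (I.wordMap v I.c) + n ∈ I.cylinder (i :: q) ∧
        G (I.wordMap v I.d) + n ∈ I.cylinder (i :: q)
    · obtain ⟨i, hci, hdi⟩ := hchild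
      refine ⟨i :: q, rfl, n, fun x hx =>
        I.mem_cylinder_of_mem_uIcc hci hdi (I.cylinder_subset_attractor q (hn x hx)) ?_⟩
      exact ((IsCircleSymmetry.add_int I.attractor n).comp hG).map_mem_uIcc_iff.2
        (I.mem_uIcc_of_mem_cylinder hx)
    · obtain ⟨j, hfst, hsnd⟩ := I.exists_gap_mem_uIcc hc hd (not_exists.1 hchild)
      obtain ⟨u, j', h⟩ := exists_hasGapLabel_map_of_mem_uIcc hG hfst hsnd
      exact absurd (hdeep u j' q j h) (Nat.lt_irrefl _)

namespace HasLabelShift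

theorem id (I : IntervalIFS m) (s : Fin (m + 1) → ℝ) (t : Fin m → ℝ) (v : List (Fin (m + 1))) :
    I.HasLabelShift s t id v 0 := by
  intro u j w j' h
  obtain ⟨rfl, rfl⟩ := h.unique (hasGapLabel_gap (u ++ v) j)
  exact (add_zero _).symm

theorem comp (hF : IsCircleSymmetry I.attractor F) (hG : IsCircleSymmetry I.attractor G)
    (hFq : I.HasLabelShift s t F q κ) (hGv : I.HasLabelShift s t G v κ')
    (hGvq : I.MapsCylinder G v q) : I.HasLabelShift s t (F ∘ G) v (κ' + κ) := by
  intro u j w j' h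
  obtain ⟨w₁, j₁, h₁⟩ := hGvq.exists_hasGapLabel hG u j
  obtain ⟨u₁, rfl⟩ := hGvq.suffix h₁
  rw [hFq u₁ j₁ w j' (h₁.map hF h), hGv u j _ j₁ h₁, add_assoc]

theorem exists_mapsCylinder (hG : IsCircleSymmetry I.attractor G)
    (hC : AdaptedConstants s t σ M δ p) (hκ : I.HasLabelShift s t G v κ)
    (hGv : I.MapsCylinder G v []) {D : ℕ}
    (h : I.HasGapLabel w j' (G (I.gapFst v j)) (G (I.gapSnd v j)))
    (hlt : formalLogLen s t w j' < -(M * (D + 1) + 2 * M)) :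
    ∃ q, q.length = D ∧ I.MapsCylinder G v q := by
  refine hGv.exists_length_eq hG fun u i w' i' h' => hC.le_length (j := i') ?_
  have hu := hC.formalLogLen_append_le u v i j
  have hvj : formalLogLen s t w j' = formalLogLen s t v j + κ := hκ [] j w j' h
  linarith [hκ u i w' i' h']

end HasLabelShift

/- A gap `(v, j)` all of whose images under the iterates of `F` have labels deeper than `N` drags
the whole cylinder `v` along: each iterate maps `v` into a cylinder of depth at least `N`, on which
the next application of `F` shifts formal log-lengths by a constant. -/
theorem exists_hasLabelShift_iterate [NeZero m] (hF : IsCircleSymmetry I.attractor F)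
    (hC : AdaptedConstants s t σ M δ p) (hI : I.IsNearlyAffine s t δ)
    (hS : I.HasSmallDistortion F N δ)
    (hv : ∀ i, ∃ w j', I.HasGapLabel w j' (F^[i] (I.gapFst v j)) (F^[i] (I.gapSnd v j)) ∧
      formalLogLen s t w j' < -(M * (N + 1) + 2 * M)) (i : ℕ) :
    ∃ κ, I.HasLabelShift s t F^[i] v κ ∧ ∃ q, N ≤ q.length ∧ I.MapsCylinder F^[i] v q := by
  induction i with
  | zero =>
    obtain ⟨w, j', hw, hlt⟩ := hv 0
    obtain ⟨rfl, rfl⟩ := hw.unique (hasGapLabel_gap v j)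
    refine ⟨0, HasLabelShift.id I s t w, w, hC.le_length (hlt.trans_le ?_), 0, fun x hx => ?_⟩
    · linarith [hC.nonneg]
    · rwa [Int.cast_zero, add_zero]
  | succ i ih =>
    obtain ⟨κ, hκ, q, hq, hvq⟩ := ih
    obtain ⟨κ', hκ'⟩ := exists_hasLabelShift hF hC hI hS hq
    have hshift := hκ'.comp hF (hF.iterate i) hκ hvq
    have hmaps := (hS.mapsCylinder q hq).comp hF hvq
    rw [← Function.iterate_succ'] at hshift hmaps
    obtain ⟨w, j', hw, hlt⟩ := hv (i + 1)
    obtain ⟨q', hq', hvq'⟩ := hshift.exists_mapsCylinder (hF.iterate _) hC hmaps hw hlt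
    exact ⟨_, hshift, q', hq'.ge, hvq'⟩

theorem HasDenseOrbits.exists_forall_eventually_mapsCylinder [NeZero m]
    (hF : IsCircleSymmetry I.attractor F) (hD : I.HasDenseOrbits F)
    (hC : AdaptedConstants s t σ M δ p) (hI : I.IsNearlyAffine s t δ)
    (hS : I.HasSmallDistortion F N δ) :
    ∃ v, ∀ D : ℕ, ∀ᶠ i : ℕ in Filter.atTop, ∃ q, q.length = D ∧ I.MapsCylinder F^[i] v q := by
  obtain ⟨v, j, hv⟩ := hD.exists_forall_hasGapLabel hF hC (-(M * (N + 1) + 2 * M))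
  refine ⟨v, fun D => ?_⟩
  filter_upwards [hD.eventually_hasGapLabel hF hC (I.isGap_intTranslates
    (I.isGap_gapFst_gapSnd v j)) (-(M * (D + 1) + 2 * M))] with i ⟨w, j', hw, hlt⟩
  obtain ⟨κ, hκ, q, -, n, hn⟩ := exists_hasLabelShift_iterate hF hC hI hS hv i
  exact hκ.exists_mapsCylinder (hF.iterate i) hC
    ⟨n, fun x hx => I.cylinder_nil.symm ▸ I.cylinder_subset_attractor q (hn x hx)⟩ hw hlt

theorem not_hasDenseOrbits [NeZero m] (hF : IsCircleSymmetry I.attractor F)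
    (hC : AdaptedConstants s t σ M δ p) (hI : I.IsNearlyAffine s t δ)
    (hS : I.HasSmallDistortion F N δ) : ¬I.HasDenseOrbits F := by
  intro hD
  obtain ⟨v, hv⟩ := hD.exists_forall_eventually_mapsCylinder hF hC hI hS
  set x := I.wordMap v I.c
  have hxv : x ∈ intTranslates (I.cylinder v) :=
    subset_intTranslates _ (mem_image_of_mem _ I.c_mem_attractor)
  have hx := mem_intTranslates_attractor hxv
  obtain ⟨n, hn⟩ := Filter.eventually_atTop.1 (hv v.length)
  obtain ⟨r, hr, hxr⟩ := hD.exists_ge hF hx v (n + 1)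
  obtain ⟨q, hq, hvq⟩ := hn r (Nat.le_of_succ_le hr)
  obtain rfl := eq_of_mem_intTranslates_cylinder hq (hvq.mapsTo (hF.iterate r) hxv) hxr
  obtain ⟨n', hn'⟩ := Filter.eventually_atTop.1 (hv r)
  obtain ⟨i, hi, hiw⟩ := hD.exists_not_mapsTo_iterate hF hxv hx (Nat.zero_lt_of_lt hr)
    (hvq.mapsTo (hF.iterate r)) n'
  obtain ⟨w, hw, hvw⟩ := hn' i hi
  exact hiw w hw (hvw.mapsTo (hF.iterate i))

end IntervalIFS

section MeanValue

open Set

variable {f f' : ℝ → ℝ} {s : Set ℝ} {x y : ℝ}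

theorem exists_sub_eq_mul_sub (hs : OrdConnected s)
    (hf : ∀ z ∈ s, HasDerivWithinAt f (f' z) s z) (hx : x ∈ s) (hy : y ∈ s) :
    ∃ ξ ∈ uIcc x y, f x - f y = f' ξ * (x - y) := by
  wlog hxy : x < y generalizing x y
  · rcases eq_or_ne x y with rfl | hne
    · exact ⟨x, left_mem_uIcc, by rw [sub_self, sub_self, mul_zero]⟩
    · obtain ⟨ξ, hξ, h⟩ := this hy hx (lt_of_le_of_ne (not_lt.1 hxy) hne.symm)
      exact ⟨ξ, uIcc_comm y x ▸ hξ, by linarith⟩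
  have hsub : Icc x y ⊆ s := hs.out hx hy
  obtain ⟨ξ, hξ, h⟩ := exists_hasDerivAt_eq_slope f f' hxy
    (fun z hz => (hf z (hsub hz)).continuousWithinAt.mono hsub) fun z hz =>
      (hf z (hsub (Ioo_subset_Icc_self hz))).hasDerivAt
        (Filter.mem_of_superset (Icc_mem_nhds hz.1 hz.2) hsub)
  refine ⟨ξ, Icc_subset_uIcc (Ioo_subset_Icc_self hξ), ?_⟩
  rw [h, ← neg_sub y x, mul_neg, div_mul_cancel₀ _ (sub_pos.2 hxy).ne', neg_sub]

theorem injOn_of_hasDerivWithinAt_ne_zero (hs : OrdConnected s)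
    (hf : ∀ z ∈ s, HasDerivWithinAt f (f' z) s z) (hf' : ∀ z ∈ s, f' z ≠ 0) : InjOn f s := by
  intro x hx y hy hxy
  obtain ⟨ξ, hξ, h⟩ := exists_sub_eq_mul_sub hs hf hx hy
  rw [hxy, sub_self, zero_eq_mul] at h
  exact sub_eq_zero.1 (h.resolve_left (hf' ξ (hs.uIcc_subset hx hy hξ)))

theorem exists_logSlope_eq (hs : OrdConnected s)
    (hf : ∀ z ∈ s, HasDerivWithinAt f (f' z) s z) (hf' : ∀ z ∈ s, f' z ≠ 0)
    (hx : x ∈ s) (hy : y ∈ s) (hxy : x ≠ y) :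
    ∃ ξ ∈ uIcc x y, logSlope f x y = Real.log |f' ξ| := by
  obtain ⟨ξ, hξ, h⟩ := exists_sub_eq_mul_sub hs hf hx hy
  refine ⟨ξ, hξ, ?_⟩
  rw [logSlope, h, abs_mul, Real.log_mul (abs_ne_zero.2 (hf' ξ (hs.uIcc_subset hx hy hξ)))
    (abs_ne_zero.2 (sub_ne_zero.2 hxy)), add_sub_cancel_right]

end MeanValue

section Circle

open Set

variable {X : Set ℝ} {F : ℝ → ℝ} {f : AddCircle (1 : ℝ) → AddCircle (1 : ℝ)} {e : ℝ} {x y : ℝ}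

theorem coe_addCircle_eq_coe_iff :
    (x : AddCircle (1 : ℝ)) = y ↔ ∃ n : ℤ, x + n = y := by
  rw [eq_comm, ← sub_eq_zero, ← AddCircle.coe_sub, AddCircle.coe_eq_zero_iff]
  simp only [zsmul_eq_mul, mul_one, eq_sub_iff_add_eq, add_comm x]

theorem coe_mem_image_coe_iff :
    (x : AddCircle (1 : ℝ)) ∈ ((↑) : ℝ → AddCircle (1 : ℝ)) '' X ↔ x ∈ intTranslates X := by
  simp only [mem_image, eq_comm, coe_addCircle_eq_coe_iff, intTranslates, mem_ofPred]
  exact ⟨fun ⟨_, hy, n, h⟩ => ⟨n, h ▸ hy⟩, fun ⟨n, h⟩ => ⟨_, h, n, rfl⟩⟩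

theorem map_add_int_of_map_add_one (h : ∀ x, F (x + 1) = F x + e) (n : ℤ) (x : ℝ) :
    F (x + n) = F x + n * e := by
  let F' : AddConstMap ℝ ℝ 1 e := ⟨F, h⟩
  have hn : F (x + n • (1 : ℝ)) = F x + n • e := AddConstMapClass.map_add_zsmul F' x n
  rwa [zsmul_one, zsmul_eq_mul] at hn

theorem iterate_coe (hf : ∀ x : ℝ, f x = (F x : ℝ)) (n : ℕ) (x : ℝ) : f^[n] x = (F^[n] x : ℝ) :=
  ((Function.Semiconj.iterate_right (f := ((↑) : ℝ → AddCircle (1 : ℝ)))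
    (fun x => (hf x).symm) n) x).symm

theorem surjective_of_map_add_one (hF : Continuous F) (he : e * e = 1)
    (h : ∀ x, F (x + 1) = F x + e) {e' : ℤ} (he' : (e' : ℝ) = e) : Function.Surjective F := by
  have hint : ∀ n : ℤ, F (0 + (n * e' : ℤ)) = F 0 + n := fun n => by
    rw [map_add_int_of_map_add_one h, Int.cast_mul, he', mul_assoc, he, mul_one]
  intro y
  refine mem_range_of_exists_le_of_exists_ge hF ⟨_, (hint ⌊y - F 0⌋).trans_le ?_⟩
    ⟨_, le_of_le_of_eq ?_ (hint ⌈y - F 0⌉).symm⟩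
  · linarith [Int.floor_le (y - F 0)]
  · linarith [Int.le_ceil (y - F 0)]

theorem IsCircleSymmetry.of_lift (hF : Continuous F) (hinj : Function.Injective F)
    (he : e = 1 ∨ e = -1) (h : ∀ x, F (x + 1) = F x + e) (hf : ∀ x : ℝ, f x = (F x : ℝ))
    (hX : f '' (((↑) : ℝ → AddCircle (1 : ℝ)) '' X) = (↑) '' X) : IsCircleSymmetry X F := by
  obtain ⟨e', he'⟩ : ∃ e' : ℤ, (e' : ℝ) = e :=
    he.elim (fun h => ⟨1, by rw [h, Int.cast_one]⟩) fun h => ⟨-1, by rw [h]; norm_num⟩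
  have hee : e * e = 1 := mul_self_eq_one_iff.2 he
  refine ⟨hF.strictMono_of_inj hinj, surjective_of_map_add_one hF hee h he', fun x => ?_,
    fun n => ⟨n * e', fun x => ?_⟩⟩
  · rw [← coe_mem_image_coe_iff, ← coe_mem_image_coe_iff, ← hf]
    refine ⟨fun hx => ?_, fun hx => hX ▸ mem_image_of_mem f hx⟩
    rw [← hX] at hx
    obtain ⟨_, ⟨y, hy, rfl⟩, hyx⟩ := hx
    rw [hf, hf, coe_addCircle_eq_coe_iff] at hyx
    obtain ⟨n, hn⟩ := hyx
    have hyx : y + (n * e' : ℤ) = x := hinj <| by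
      rw [map_add_int_of_map_add_one h, Int.cast_mul, he', mul_assoc, hee, mul_one, hn]
    exact coe_mem_image_coe_iff.2 ⟨-(n * e'), by rwa [← hyx, Int.cast_neg, add_neg_cancel_right]⟩
  · rw [map_add_int_of_map_add_one h, Int.cast_mul, he']

end Circle

namespace IntervalIFS

open Set

variable {m : ℕ} {I : IntervalIFS m} {s : Fin (m + 1) → ℝ} {t : Fin m → ℝ} {F : ℝ → ℝ}
  {f : AddCircle (1 : ℝ) → AddCircle (1 : ℝ)} {σ M δ : ℝ} {p : ℕ}

theorem HasDenseOrbits.of_closure_eq (hF : IsCircleSymmetry I.attractor F)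
    (hf : ∀ x : ℝ, f x = (F x : ℝ))
    (hmin : ∀ x ∈ ((↑) : ℝ → AddCircle (1 : ℝ)) '' I.attractor,
      ((↑) : ℝ → AddCircle (1 : ℝ)) '' I.attractor ⊆ closure {y | ∃ n : ℕ, f^[n] x = y}) :
    I.HasDenseOrbits F := by
  intro x hx w
  set z := I.wordMap w I.c
  have hz : z ∈ I.cylinder w := mem_image_of_mem _ I.c_mem_attractor
  have hzI := I.attractor_subset (I.cylinder_subset_attractor w hz)
  obtain ⟨η, hη, hball⟩ := I.exists_pos_forall_mem_cylinder hz
  set V := Metric.ball z (min η (1 - (I.d - I.c)))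
  have hV : IsOpen (((↑) : ℝ → AddCircle (1 : ℝ)) '' V) :=
    QuotientAddGroup.isOpenMap_coe _ Metric.isOpen_ball
  have hzV : z ∈ V := Metric.mem_ball_self (lt_min hη (sub_pos.2 I.d_sub_c_lt_one))
  obtain ⟨_, ⟨y, hy, hyn⟩, n, rfl⟩ := mem_closure_iff.1
    (hmin x (coe_mem_image_coe_iff.2 hx) (mem_image_of_mem _ (I.cylinder_subset_attractor w hz)))
    _ hV (mem_image_of_mem _ hzV)
  rw [iterate_coe hf, eq_comm, coe_addCircle_eq_coe_iff] at hyn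
  obtain ⟨k, rfl⟩ := hyn
  obtain ⟨l, hl⟩ := ((hF.iterate n).mem_iff x).2 hx
  rw [Metric.mem_ball, Real.dist_eq, lt_min_iff] at hy
  obtain rfl : l = k := I.int_eq_of_abs_sub_lt (y := z - k) (I.attractor_subset hl)
    (by rwa [sub_add_cancel]) (by rw [sub_sub_eq_add_sub]; exact hy.2)
  exact ⟨n, l, hball _ hl hy.1⟩

theorem exists_forall_abs_sub_lt (I : IntervalIFS m) {g : ℝ → ℝ} (hg : ContinuousOn g (Icc I.c I.d))
    {ε : ℝ} (hε : 0 < ε) :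
    ∃ N : ℕ, ∀ w : List (Fin (m + 1)), N ≤ w.length →
      ∀ x ∈ uIcc (I.wordMap w I.c) (I.wordMap w I.d),
      ∀ y ∈ uIcc (I.wordMap w I.c) (I.wordMap w I.d), |g x - g y| < ε := by
  obtain ⟨η, hη, hgη⟩ := Metric.uniformContinuousOn_iff.1
    (isCompact_Icc.uniformContinuousOn_of_continuous hg) ε hε
  obtain ⟨N, hN⟩ := exists_pow_lt_of_lt_one hη I.ratio_lt_one
  refine ⟨N, fun w hw x hx y hy => ?_⟩
  have hsub : uIcc (I.wordMap w I.c) (I.wordMap w I.d) ⊆ Icc I.c I.d :=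
    uIcc_subset_Icc (I.mapsTo_wordMap w I.left_mem) (I.mapsTo_wordMap w I.right_mem)
  refine hgη x (hsub hx) y (hsub hy) ?_
  calc |x - y| ≤ |I.wordMap w I.d - I.wordMap w I.c| :=
        abs_sub_comm x y ▸ abs_sub_le_of_uIcc_subset_uIcc (uIcc_subset_uIcc hx hy)
    _ ≤ I.ratio ^ w.length := I.abs_sub_le_of_mem_cylinder
        (mem_image_of_mem _ I.d_mem_attractor) (mem_image_of_mem _ I.c_mem_attractor)
    _ ≤ I.ratio ^ N := pow_le_pow_of_le_one I.ratio.2 I.ratio_lt_one.le hw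
    _ < η := hN

theorem exists_hasSmallDistortion (hF : ContDiff ℝ 1 F) (hF' : ∀ x, deriv F x ≠ 0)
    (hsym : IsCircleSymmetry I.attractor F) (hδ : 0 < δ) : ∃ N, I.HasSmallDistortion F N δ := by
  have hlog : Continuous fun x => Real.log |deriv F x| :=
    (hF.continuous_deriv le_rfl).abs.log fun x => abs_ne_zero.2 (hF' x)
  obtain ⟨N₁, hN₁⟩ := I.exists_forall_abs_sub_lt hF.continuous.continuousOn
    (sub_pos.2 I.d_sub_c_lt_one)
  obtain ⟨N₂, hN₂⟩ := I.exists_forall_abs_sub_lt hlog.continuousOn hδ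
  refine ⟨max N₁ N₂, fun w hw => ?_, fun w hw x hx y hy x' hx' y' hy' hxy hxy' => ?_⟩
  · have hmem : ∀ x ∈ I.cylinder w, F x ∈ intTranslates I.attractor := fun x hx =>
      (hsym.mem_iff x).2 (subset_intTranslates _ (I.cylinder_subset_attractor w hx))
    obtain ⟨n, hn⟩ := hmem _ (mem_image_of_mem _ I.c_mem_attractor)
    refine ⟨n, fun x hx => I.cylinder_nil.symm ▸ ?_⟩
    obtain ⟨n', hn'⟩ := hmem x hx
    rwa [← I.int_eq_of_abs_sub_lt (I.attractor_subset hn') (I.attractor_subset hn)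
      (hN₁ w (le_of_max_le_left hw) x (I.mem_uIcc_of_mem_cylinder hx) _ left_mem_uIcc)]
  · have hderiv : ∀ z ∈ univ, HasDerivWithinAt F (deriv F z) univ z := fun z _ =>
      ((hF.differentiable one_ne_zero).differentiableAt).hasDerivAt.hasDerivWithinAt
    have hslope : ∀ {x y}, x ∈ I.cylinder w → y ∈ I.cylinder w → x ≠ y →
        ∃ ξ ∈ uIcc (I.wordMap w I.c) (I.wordMap w I.d), logSlope F x y = Real.log |deriv F ξ| := by
      intro x y hx hy hxy
      obtain ⟨ξ, hξ, h⟩ := exists_logSlope_eq ordConnected_univ hderiv (fun z _ => hF' z)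
        (mem_univ x) (mem_univ y) hxy
      exact ⟨ξ, uIcc_subset_uIcc (I.mem_uIcc_of_mem_cylinder hx)
        (I.mem_uIcc_of_mem_cylinder hy) hξ, h⟩
    obtain ⟨ξ, hξ, h⟩ := hslope hx hy hxy
    obtain ⟨ξ', hξ', h'⟩ := hslope hx' hy' hxy'
    rw [h, h']
    exact (hN₂ w (le_of_max_le_right hw) ξ hξ ξ' hξ').le

theorem not_isC1Minimal [NeZero m] (hC : AdaptedConstants s t σ M δ p)
    (hI : I.IsNearlyAffine s t δ) :
    ¬IsC1Minimal (((↑) : ℝ → AddCircle (1 : ℝ)) '' I.attractor) := by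
  rintro ⟨F, f, hF, hF', ⟨e, he, hFe⟩, hf, -, -, himage, hmin⟩
  have hinj : Function.Injective F := injOn_univ.1 <|
    injOn_of_hasDerivWithinAt_ne_zero ordConnected_univ
      (fun z _ => ((hF.differentiable one_ne_zero) z).hasDerivAt.hasDerivWithinAt) fun z _ => hF' z
  have hsym := IsCircleSymmetry.of_lift hF.continuous hinj he hFe hf himage
  obtain ⟨N, hS⟩ := exists_hasSmallDistortion hF hF' hsym hC.pos
  exact not_hasDenseOrbits hsym hC hI hS (.of_closure_eq hsym hf fun x hx => (hmin x hx).ge)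

theorem IsNearlyAffine.mono {s' : Fin (m + 1) → ℝ} {t' : Fin m → ℝ} {δ' : ℝ}
    (h : I.IsNearlyAffine s t δ) (hs : ∀ i, |s i - s' i| + δ ≤ δ')
    (ht : ∀ j, |t j - t' j| + δ ≤ δ') : I.IsNearlyAffine s' t' δ' where
  logLen_cons i w := by
    have hle := abs_add_le (s i - s' i) (I.logLen (i :: w) - I.logLen w - s i)
    rw [sub_add_sub_cancel'] at hle
    exact hle.trans ((add_le_add_right (h.logLen_cons i w) _).trans (hs i))
  log_gap w j := by
    have hle := abs_add_le (t j - t' j)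
      (Real.log |I.gapFst w j - I.gapSnd w j| - I.logLen w - t j)
    rw [sub_add_sub_cancel'] at hle
    exact hle.trans ((add_le_add_right (h.log_gap w j) _).trans (ht j))

/- The constants adapted to `(s, t)` still serve, with half the error, for all parameters near
`(s, t)`; compactness makes the error uniform. -/
theorem exists_pos_forall_not_isC1Minimal [NeZero m] {P : Set ((Fin (m + 1) → ℝ) × (Fin m → ℝ))}
    (hP : IsCompact P) (hneg : ∀ q ∈ P, ∀ i, q.1 i < 0) :
    ∃ δ > 0, ∀ q ∈ P, ∀ I : IntervalIFS m, I.IsNearlyAffine q.1 q.2 δ →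
      ¬IsC1Minimal (((↑) : ℝ → AddCircle (1 : ℝ)) '' I.attractor) := by
  refine hP.induction_on (p := fun P => ∃ δ > 0, ∀ q ∈ P, ∀ I : IntervalIFS m,
    I.IsNearlyAffine q.1 q.2 δ → ¬IsC1Minimal (((↑) : ℝ → AddCircle (1 : ℝ)) '' I.attractor))
    ⟨1, one_pos, fun _ h => h.elim⟩
    (fun P Q hPQ ⟨δ, hδ, h⟩ => ⟨δ, hδ, fun q hq => h q (hPQ hq)⟩) ?_ fun q hq => ?_
  · rintro P Q ⟨δ, hδ, h⟩ ⟨δ', hδ', h'⟩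
    refine ⟨min δ δ', lt_min hδ hδ', fun q hq I hI => ?_⟩
    rcases hq with hq | hq
    · exact h q hq I (hI.mono (by simp) (by simp))
    · exact h' q hq I (hI.mono (by simp) (by simp))
  · obtain ⟨σ, M, δ, p, hC⟩ := exists_adaptedConstants (hneg q hq) q.2
    refine ⟨Metric.ball q (δ / 2), mem_nhdsWithin_of_mem_nhds
      (Metric.ball_mem_nhds q (half_pos hC.pos)), δ / 2, half_pos hC.pos, fun q' hq' I hI =>
      not_isC1Minimal hC (hI.mono (fun i => ?_) fun j => ?_)⟩
    · have hi := (dist_le_pi_dist q'.1 q.1 i).trans (le_max_left _ _ |>.trans hq'.le)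
      rw [Real.dist_eq] at hi
      linarith
    · have hj := (dist_le_pi_dist q'.2 q.2 j).trans (le_max_right _ _ |>.trans hq'.le)
      rw [Real.dist_eq] at hj
      linarith

end IntervalIFS

section LogDistortion

open Set

variable {f g f' φ : ℝ → ℝ} {s t : Set ℝ} {C C' : ℝ} {K : NNReal} {a b x y : ℝ}

theorem logSlope_comp (g f : ℝ → ℝ) (x y : ℝ) :
    logSlope (g ∘ f) x y = logSlope g (f x) (f y) + logSlope f x y :=
  (sub_add_sub_cancel _ _ _).symm

/-- On the interval between any two points `e₁` and `e₂` of `s`, the logarithms of the slopes of `f`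
vary by at most `C * |e₁ - e₂|`. -/
def HasLogDistortion (f : ℝ → ℝ) (s : Set ℝ) (C : ℝ) : Prop :=
  ∀ ⦃e₁⦄, e₁ ∈ s → ∀ ⦃e₂⦄, e₂ ∈ s → ∀ ⦃x⦄, x ∈ uIcc e₁ e₂ → ∀ ⦃y⦄, y ∈ uIcc e₁ e₂ →
    ∀ ⦃x'⦄, x' ∈ uIcc e₁ e₂ → ∀ ⦃y'⦄, y' ∈ uIcc e₁ e₂ → x ≠ y → x' ≠ y' →
    |logSlope f x y - logSlope f x' y'| ≤ C * |e₁ - e₂|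

theorem abs_log_sub_log_le (ha : 1 ≤ a) (hb : 1 ≤ b) : |Real.log a - Real.log b| ≤ |a - b| := by
  wlog hab : b ≤ a generalizing a b
  · rw [abs_sub_comm, abs_sub_comm a]
    exact this hb ha (not_le.1 hab).le
  have hb0 : 0 < b := one_pos.trans_le hb
  have ha0 : 0 < a := one_pos.trans_le ha
  rw [abs_of_nonneg (sub_nonneg.2 (Real.log_le_log hb0 hab)), abs_of_nonneg (sub_nonneg.2 hab)]
  calc Real.log a - Real.log b = Real.log (a / b) := (Real.log_div ha0.ne' hb0.ne').symm
    _ ≤ a / b - 1 := Real.log_le_sub_one_of_pos (div_pos ha0 hb0)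
    _ = (a - b) / b := div_sub_one hb0.ne'
    _ ≤ a - b := div_le_self (sub_nonneg.2 hab) hb

namespace HasLogDistortion

theorem of_hasDerivWithinAt (hs : OrdConnected s) (hf : ∀ z ∈ s, HasDerivWithinAt f (f' z) s z)
    (hone : ∀ z ∈ s, 1 ≤ |f' z|) (hC : 0 ≤ C)
    (hlip : ∀ x ∈ s, ∀ y ∈ s, |f' x - f' y| ≤ C * |x - y|) : HasLogDistortion f s C := by
  intro e₁ he₁ e₂ he₂ x hx y hy x' hx' y' hy' hxy hxy'
  have hsub := hs.uIcc_subset he₁ he₂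
  have hne : ∀ z ∈ s, f' z ≠ 0 := fun z hz => abs_pos.1 (one_pos.trans_le (hone z hz))
  obtain ⟨ξ, hξ, h⟩ := exists_logSlope_eq hs hf hne (hsub hx) (hsub hy) hxy
  obtain ⟨ξ', hξ', h'⟩ := exists_logSlope_eq hs hf hne (hsub hx') (hsub hy') hxy'
  have hξe := uIcc_subset_uIcc hx hy hξ
  have hξe' := uIcc_subset_uIcc hx' hy' hξ'
  rw [h, h']
  calc |(Real.log |f' ξ| - Real.log |f' ξ'|)| ≤ |(|f' ξ| - |f' ξ'|)| :=
        abs_log_sub_log_le (hone ξ (hsub hξe)) (hone ξ' (hsub hξe'))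
    _ ≤ |f' ξ - f' ξ'| := abs_abs_sub_abs_le_abs_sub _ _
    _ ≤ C * |ξ - ξ'| := hlip ξ (hsub hξe) ξ' (hsub hξe')
    _ ≤ C * |e₁ - e₂| := mul_le_mul_of_nonneg_left (abs_sub_comm e₁ e₂ ▸ abs_sub_comm ξ ξ' ▸
        abs_sub_le_of_uIcc_subset_uIcc (uIcc_subset_uIcc hξe hξe')) hC

theorem rightInverse (hf : HasLogDistortion f s C) (hC : 0 ≤ C) (ht : OrdConnected t)
    (hφ : MapsTo φ t s) (hfφ : RightInvOn φ f t) (hlip : LipschitzOnWith K φ t)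
    (hmono : StrictMonoOn φ t ∨ StrictAntiOn φ t) : HasLogDistortion φ t (C * K) := by
  intro e₁ he₁ e₂ he₂ x hx y hy x' hx' y' hy' hxy hxy'
  have hsub := ht.uIcc_subset he₁ he₂
  have hmem : ∀ {z}, z ∈ uIcc e₁ e₂ → φ z ∈ uIcc (φ e₁) (φ e₂) := fun hz =>
    (image_mem_uIcc_iff hmono he₁ he₂ (hsub hz)).2 hz
  have hslope : ∀ {x y}, x ∈ t → y ∈ t → logSlope φ x y = -logSlope f (φ x) (φ y) := by
    intro x y hx hy
    rw [logSlope, logSlope, hfφ hx, hfφ hy, neg_sub]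
  rw [hslope (hsub hx) (hsub hy), hslope (hsub hx') (hsub hy'), neg_sub_neg, abs_sub_comm,
    mul_assoc]
  exact (hf (hφ he₁) (hφ he₂) (hmem hx) (hmem hy) (hmem hx') (hmem hy')
    (hfφ.injOn.ne (hsub hx) (hsub hy) hxy) (hfφ.injOn.ne (hsub hx') (hsub hy') hxy')).trans
    (mul_le_mul_of_nonneg_left (hlip.dist_le_mul e₁ he₁ e₂ he₂) hC)

theorem comp (hg : HasLogDistortion g t C') (hf : HasLogDistortion f s C) (hC' : 0 ≤ C')
    (hs : OrdConnected s) (hft : MapsTo f s t) (hlip : LipschitzOnWith K f s)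
    (hmono : StrictMonoOn f s ∨ StrictAntiOn f s) :
    HasLogDistortion (g ∘ f) s (C' * K + C) := by
  intro e₁ he₁ e₂ he₂ x hx y hy x' hx' y' hy' hxy hxy'
  have hsub := hs.uIcc_subset he₁ he₂
  have hmem : ∀ {z}, z ∈ uIcc e₁ e₂ → f z ∈ uIcc (f e₁) (f e₂) := fun hz =>
    (image_mem_uIcc_iff hmono he₁ he₂ (hsub hz)).2 hz
  have hinj : InjOn f s := hmono.elim StrictMonoOn.injOn StrictAntiOn.injOn
  rw [logSlope_comp, logSlope_comp, add_sub_add_comm, add_mul, mul_assoc]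
  refine (abs_add_le _ _).trans (add_le_add ?_ (hf he₁ he₂ hx hy hx' hy' hxy hxy'))
  exact (hg (hft he₁) (hft he₂) (hmem hx) (hmem hy) (hmem hx') (hmem hy')
    (hinj.ne (hsub hx) (hsub hy) hxy) (hinj.ne (hsub hx') (hsub hy') hxy')).trans
    (mul_le_mul_of_nonneg_left (hlip.dist_le_mul e₁ he₁ e₂ he₂) hC')

end HasLogDistortion

end LogDistortion

namespace IntervalIFS

open Set

variable {m : ℕ} (I : IntervalIFS m) {ε : ℝ}

/-- The logarithm of the contraction ratio of the hull under the `i`-th branch. -/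
noncomputable def logRatio (i : Fin (m + 1)) : ℝ := logSlope (I.branch i) I.c I.d

/-- The logarithm of the relative length of the gap between the branches `j` and `j + 1`. -/
noncomputable def gapLogRatio (j : Fin m) : ℝ :=
  Real.log |I.rightEnd j.castSucc - I.leftEnd j.succ| - Real.log |I.c - I.d|

variable {I}

theorem one_sub_ratio_pos (I : IntervalIFS m) : 0 < 1 - (I.ratio : ℝ) :=
  sub_pos.2 I.ratio_lt_one

theorem hasLogDistortion_wordMap (hε : 0 ≤ ε)
    (h : ∀ i, HasLogDistortion (I.branch i) (Icc I.c I.d) ε) (w : List (Fin (m + 1))) :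
    HasLogDistortion (I.wordMap w) (Icc I.c I.d) (ε / (1 - I.ratio)) := by
  have hratio := I.one_sub_ratio_pos
  have hnonneg : 0 ≤ ε / (1 - I.ratio) := div_nonneg hε hratio.le
  induction w with
  | nil =>
    intro e₁ _ e₂ _ x _ y _ x' _ y' _ _ _
    simp only [logSlope, wordMap, sub_self, abs_zero]
    positivity
  | cons i w ih =>
    have hcomp := ih.comp (h i) hnonneg ordConnected_Icc (I.mapsTo_branch i)
      (I.lipschitzOnWith_branch i) (I.branch_mono_or_anti i)
    have hsum : ε / (1 - I.ratio) * I.ratio + ε = ε / (1 - I.ratio) := by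
      field_simp
      ring
    rwa [hsum] at hcomp

theorem isNearlyAffine_of_hasLogDistortion (hε : 0 ≤ ε)
    (h : ∀ i, HasLogDistortion (I.branch i) (Icc I.c I.d) ε) :
    I.IsNearlyAffine I.logRatio I.gapLogRatio (ε / (1 - I.ratio)) := by
  have hlen : |I.c - I.d| ≤ 1 := by
    rw [abs_sub_comm, abs_of_pos (sub_pos.2 I.c_lt_d)]
    exact I.d_sub_c_lt_one.le
  have hslope : ∀ w, ∀ x ∈ Icc I.c I.d, ∀ y ∈ Icc I.c I.d, x ≠ y →
      |logSlope (I.wordMap w) x y - logSlope (I.wordMap w) I.c I.d| ≤ ε / (1 - I.ratio) := by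
    intro w x hx y hy hxy
    refine (hasLogDistortion_wordMap hε h w I.left_mem I.right_mem (Icc_subset_uIcc hx)
      (Icc_subset_uIcc hy) left_mem_uIcc right_mem_uIcc hxy I.c_lt_d.ne).trans ?_
    exact mul_le_of_le_one_right (div_nonneg hε I.one_sub_ratio_pos.le) hlen
  refine ⟨fun i w => ?_, fun w j => ?_⟩
  · have hi := hslope w _ (I.mapsTo_branch i I.left_mem) _ (I.mapsTo_branch i I.right_mem)
      (I.wordMap_left_ne_right [i])
    convert hi using 2
    simp only [logLen, logRatio, logSlope, wordMap]
    ring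
  · have hj := hslope w _ (I.attractor_subset (I.rightEnd_mem_attractor j.castSucc)) _
      (I.attractor_subset (I.leftEnd_mem_attractor j.succ)) (I.gapFst_ne_gapSnd [] j)
    convert hj using 2
    simp only [logLen, gapLogRatio, logSlope, gapFst, gapSnd]
    ring

end IntervalIFS

/-- On the interval `[α, β]`, the map `S` is differentiable with derivative `S'` of Lipschitz
constant `ε`, and it maps `[α, β]` onto `[c, d]`. -/
structure IsFullBranch (S S' : ℝ → ℝ) (ε α β c d : ℝ) : Prop where
  hasDerivWithinAt : ∀ x ∈ Set.Icc α β, HasDerivWithinAt S (S' x) (Set.Icc α β) x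
  abs_deriv_sub_le : ∀ x ∈ Set.Icc α β, ∀ y ∈ Set.Icc α β, |S' x - S' y| ≤ ε * |x - y|
  image_eq : S '' Set.Icc α β = Set.Icc c d

namespace IsFullBranch

open Set

variable {S S' : ℝ → ℝ} {ε α β c d r x y : ℝ}

theorem exists_le_abs_deriv_mul (h : IsFullBranch S S' ε α β c d) (hcd : c ≤ d) :
    ∃ ξ ∈ Icc α β, d - c ≤ |S' ξ| * (β - α) := by
  obtain ⟨x, hx, hxc⟩ := h.image_eq.ge (left_mem_Icc.2 hcd)
  obtain ⟨y, hy, hyd⟩ := h.image_eq.ge (right_mem_Icc.2 hcd)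
  obtain ⟨ξ, hξ, hslope⟩ := exists_sub_eq_mul_sub ordConnected_Icc h.hasDerivWithinAt hy hx
  refine ⟨ξ, uIcc_subset_Icc hy hx hξ, ?_⟩
  calc d - c = S' ξ * (y - x) := by rw [← hslope, hxc, hyd]
    _ ≤ |S' ξ| * |y - x| := (le_abs_self _).trans_eq (abs_mul _ _)
    _ ≤ |S' ξ| * (β - α) := mul_le_mul_of_nonneg_left
        (abs_sub_le_of_le_of_le hy.1 hy.2 hx.1 hx.2) (abs_nonneg _)

theorem exists_abs_deriv_mul_le (h : IsFullBranch S S' ε α β c d) (hαβ : α ≤ β) :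
    ∃ ξ ∈ Icc α β, |S' ξ| * (β - α) ≤ d - c := by
  have hα := left_mem_Icc.2 hαβ
  have hβ := right_mem_Icc.2 hαβ
  obtain ⟨ξ, hξ, hslope⟩ := exists_sub_eq_mul_sub ordConnected_Icc h.hasDerivWithinAt hβ hα
  refine ⟨ξ, uIcc_subset_Icc hβ hα hξ, ?_⟩
  have hSα := h.image_eq.le (mem_image_of_mem S hα)
  have hSβ := h.image_eq.le (mem_image_of_mem S hβ)
  calc |S' ξ| * (β - α) = |S β - S α| := by rw [hslope, abs_mul, abs_of_nonneg (sub_nonneg.2 hαβ)]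
    _ ≤ d - c := abs_sub_le_of_le_of_le hSβ.1 hSβ.2 hSα.1 hSα.2

theorem abs_abs_deriv_sub_le (h : IsFullBranch S S' ε α β c d) (hε : ε ≤ r / 2) (hr : 0 < r)
    (hαβ : β - α ≤ 1) (hx : x ∈ Icc α β) (hy : y ∈ Icc α β) : |(|S' x| - |S' y|)| ≤ r / 2 :=
  calc |(|S' x| - |S' y|)| ≤ ε * |x - y| :=
        (abs_abs_sub_abs_le_abs_sub _ _).trans (h.abs_deriv_sub_le x hx y hy)
    _ ≤ r / 2 * |x - y| := mul_le_mul_of_nonneg_right hε (abs_nonneg _)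
    _ ≤ r / 2 := mul_le_of_le_one_right (half_pos hr).le
        ((abs_sub_le_of_le_of_le hx.1 hx.2 hy.1 hy.2).trans hαβ)

theorem one_add_half_le_abs_deriv (h : IsFullBranch S S' ε α β c d) (hε : ε ≤ r / 2) (hr : 0 < r)
    (hlen : r ≤ β - α) (hgap : β - α + r ≤ d - c) (hdc : d - c ≤ 1) (hx : x ∈ Icc α β) :
    1 + r / 2 ≤ |S' x| := by
  obtain ⟨ξ, hξ, hle⟩ := h.exists_le_abs_deriv_mul (by linarith)
  have hvar := (abs_le.1 (h.abs_abs_deriv_sub_le hε hr (by linarith) hx hξ)).1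
  have hlarge : 1 + r ≤ |S' ξ| := by
    refine le_of_mul_le_mul_right (le_trans ?_ hle) (hr.trans_le hlen)
    nlinarith
  linarith

theorem abs_deriv_le (h : IsFullBranch S S' ε α β c d) (hε : ε ≤ r / 2) (hr : 0 < r)
    (hlen : r ≤ β - α) (hαβ : β - α ≤ 1) (hdc : d - c ≤ 1) (hx : x ∈ Icc α β) :
    |S' x| ≤ 1 / r + 1 := by
  obtain ⟨ξ, hξ, hle⟩ := h.exists_abs_deriv_mul_le (by linarith)
  have hvar := (abs_le.1 (h.abs_abs_deriv_sub_le hε hr hαβ hx hξ)).2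
  have hsmall : |S' ξ| ≤ 1 / r := by
    rw [le_div_iff₀ hr]
    exact (mul_le_mul_of_nonneg_left hlen (abs_nonneg _)).trans (hle.trans hdc)
  linarith

theorem mapsTo_inv (h : IsFullBranch S S' ε α β c d) :
    MapsTo (Function.invFunOn S (Icc α β)) (Icc c d) (Icc α β) :=
  SurjOn.mapsTo_invFunOn h.image_eq.ge

theorem rightInvOn_inv (h : IsFullBranch S S' ε α β c d) :
    RightInvOn (Function.invFunOn S (Icc α β)) S (Icc c d) :=
  SurjOn.rightInvOn_invFunOn h.image_eq.ge

theorem lipschitzOnWith_inv (h : IsFullBranch S S' ε α β c d) {K : NNReal}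
    (hK : ∀ x ∈ Icc α β, 1 ≤ K * |S' x|) :
    LipschitzOnWith K (Function.invFunOn S (Icc α β)) (Icc c d) := by
  refine LipschitzOnWith.of_dist_le_mul fun x hx y hy => ?_
  have hx' := h.mapsTo_inv hx
  have hy' := h.mapsTo_inv hy
  obtain ⟨ξ, hξ, hslope⟩ := exists_sub_eq_mul_sub ordConnected_Icc h.hasDerivWithinAt hx' hy'
  rw [h.rightInvOn_inv hx, h.rightInvOn_inv hy] at hslope
  rw [Real.dist_eq, Real.dist_eq, hslope, abs_mul, ← mul_assoc]
  exact le_mul_of_one_le_left (abs_nonneg _) (hK ξ (uIcc_subset_Icc hx' hy' hξ))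

theorem inv_mono_or_anti (h : IsFullBranch S S' ε α β c d) (hcd : c ≤ d)
    (hcont : ContinuousOn (Function.invFunOn S (Icc α β)) (Icc c d)) :
    StrictMonoOn (Function.invFunOn S (Icc α β)) (Icc c d) ∨
      StrictAntiOn (Function.invFunOn S (Icc α β)) (Icc c d) :=
  hcont.strictMonoOn_of_injOn_Icc' hcd h.rightInvOn_inv.injOn

theorem exists_logSlope_inv_eq (h : IsFullBranch S S' ε α β c d) (hS' : ∀ z ∈ Icc α β, S' z ≠ 0)
    (hx : x ∈ Icc c d) (hy : y ∈ Icc c d) (hxy : x ≠ y) :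
    ∃ ξ ∈ Icc α β, logSlope (Function.invFunOn S (Icc α β)) x y = -Real.log |S' ξ| := by
  have hx' := h.mapsTo_inv hx
  have hy' := h.mapsTo_inv hy
  obtain ⟨ξ, hξ, hslope⟩ := exists_logSlope_eq ordConnected_Icc h.hasDerivWithinAt hS' hx' hy'
    (h.rightInvOn_inv.injOn.ne hx hy hxy)
  refine ⟨ξ, uIcc_subset_Icc hx' hy' hξ, ?_⟩
  rw [← hslope, logSlope, logSlope, h.rightInvOn_inv hx, h.rightInvOn_inv hy, neg_sub]

end IsFullBranch

section MaximalInvariantSet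

open Set

/-- The set of points all of whose iterates under `S` stay in `U`, the set `C_S` of the paper when
`U` is the domain of `S`. -/
def maximalInvariantSet {α : Type*} (S : α → α) (U : Set α) : Set α :=
  {x ∈ U | ∀ n : ℕ, S^[n] x ∈ U}

theorem mem_maximalInvariantSet_iff {α : Type*} {S : α → α} {U : Set α} {x : α} :
    x ∈ maximalInvariantSet S U ↔ x ∈ U ∧ S x ∈ maximalInvariantSet S U :=
  ⟨fun h => ⟨h.1, h.2 1, fun n => h.2 (n + 1)⟩,
    fun h => ⟨h.1, fun n => n.casesOn h.1 fun n => h.2.2 n⟩⟩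

theorem iUnion_image_maximalInvariantSet {ι α : Type*} {S : α → α} {J : ι → Set α} {L : Set α}
    {φ : ι → α → α} (hφ : ∀ i, MapsTo (φ i) L (J i)) (hSφ : ∀ i, RightInvOn (φ i) S L)
    (hS : ∀ i, MapsTo S (J i) L) (hinj : ∀ i, InjOn S (J i)) (hL : ∀ i, J i ⊆ L) :
    ⋃ i, φ i '' maximalInvariantSet S (⋃ i, J i) = maximalInvariantSet S (⋃ i, J i) := by
  have hKL : maximalInvariantSet S (⋃ i, J i) ⊆ L := fun x hx => iUnion_subset hL hx.1
  ext x
  rw [mem_iUnion]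
  constructor
  · rintro ⟨i, y, hy, rfl⟩
    rw [mem_maximalInvariantSet_iff, hSφ i (hKL hy)]
    exact ⟨mem_iUnion_of_mem i (hφ i (hKL hy)), hy⟩
  · intro hx
    rw [mem_maximalInvariantSet_iff, mem_iUnion] at hx
    obtain ⟨⟨i, hi⟩, hSx⟩ := hx
    exact ⟨i, S x, hSx, hinj i (hφ i (hS i hi)) hi (hSφ i (hS i hi))⟩

theorem isClosed_of_isClosed_image_coe {X : Set ℝ} {c d : ℝ} (hX : X ⊆ Icc c d) (hdc : d - c < 1)
    (h : IsClosed (((↑) : ℝ → AddCircle (1 : ℝ)) '' X)) : IsClosed X := by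
  have hpre : X = Icc c d ∩ ((↑) : ℝ → AddCircle (1 : ℝ)) ⁻¹' ((↑) '' X) := by
    refine Subset.antisymm (fun x hx => ⟨hX hx, mem_image_of_mem _ hx⟩) ?_
    rintro x ⟨hx, y, hy, hyx⟩
    obtain ⟨n, rfl⟩ := coe_addCircle_eq_coe_iff.1 hyx
    have hy' := hX hy
    have h1 : n < 1 := by exact_mod_cast (by linarith [hx.2, hy'.1] : (n : ℝ) < 1)
    have h2 : -1 < n := by exact_mod_cast (by linarith [hx.1, hy'.2] : (-1 : ℝ) < n)
    obtain rfl : n = 0 := by omega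
    rwa [Int.cast_zero, add_zero]
  rw [hpre]
  exact isClosed_Icc.inter (h.preimage (AddCircle.continuous_mk' 1))

end MaximalInvariantSet

/-- The intervals `[a i, b i]` are listed from left to right inside `[c, d]`, an interval shorter
than the circle, and both their lengths and their mutual distances are at least `r`. -/
structure IsSeparated {m : ℕ} (a b : Fin (m + 1) → ℝ) (c d r : ℝ) : Prop where
  pos : 0 < r
  le_length : ∀ i, r ≤ b i - a i
  le_gap : ∀ ⦃i i'⦄, i < i' → r ≤ a i' - b i
  left_le : ∀ i, c ≤ a i
  le_right : ∀ i, b i ≤ d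
  sub_lt_one : d - c < 1

theorem exists_isSeparated {m : ℕ} {a b : Fin (m + 1) → ℝ} {c d : ℝ} (hab : ∀ i, a i < b i)
    (hlt : ∀ ⦃i i'⦄, i < i' → b i < a i') (hsub : ∀ i, Set.Icc (a i) (b i) ⊆ Set.Icc c d)
    (hdc : d - c < 1) : ∃ r, IsSeparated a b c d r := by
  have hev : ∀ᶠ r in nhdsWithin (0 : ℝ) (Set.Ioi 0),
      (∀ i, r ≤ b i - a i) ∧ ∀ i i', i < i' → r ≤ a i' - b i := by
    refine (Filter.eventually_all.2 fun i => ?_).and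
      (Filter.eventually_all.2 fun i => Filter.eventually_all.2 fun i' => ?_)
    · exact nhdsWithin_le_nhds (Iic_mem_nhds (sub_pos.2 (hab i)))
    · by_cases h : i < i'
      · filter_upwards [nhdsWithin_le_nhds (Iic_mem_nhds (sub_pos.2 (hlt h)))] with r hr _ using hr
      · exact .of_forall fun r hi => absurd hi h
  obtain ⟨r, ⟨hlen, hgap⟩, hr⟩ := (hev.and self_mem_nhdsWithin).exists
  exact ⟨r, hr, hlen, fun i i' => hgap i i', fun i => (hsub i (Set.left_mem_Icc.2 (hab i).le)).1,
    fun i => (hsub i (Set.right_mem_Icc.2 (hab i).le)).2, hdc⟩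

namespace IntervalIFS

open Set

variable {m : ℕ} {r : ℝ}

theorem exists_branch_eq_and_attractor_eq [NeZero m] {φ : Fin (m + 1) → ℝ → ℝ} {K : Set ℝ}
    {ρ : NNReal} {c d : ℝ} (hdc : d - c < 1) (hρ : ρ < 1) (hK : IsCompact K) (hne : K.Nonempty)
    (hKcd : K ⊆ Icc c d) (hφK : ⋃ i, φ i '' K = K)
    (hlip : ∀ i, LipschitzOnWith ρ (φ i) (Icc c d))
    (hmono : ∀ i, StrictMonoOn (φ i) (Icc c d) ∨ StrictAntiOn (φ i) (Icc c d))
    (hlt : ∀ ⦃i i'⦄, i < i' → ∀ x ∈ Icc c d, ∀ y ∈ Icc c d, φ i x < φ i' y) :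
    ∃ I : IntervalIFS m, I.branch = φ ∧ I.attractor = K ∧ I.ratio = ρ := by
  have hinf := hK.sInf_mem hne
  have hsup := hK.sSup_mem hne
  have hhull : Icc (sInf K) (sSup K) ⊆ Icc c d := Icc_subset_Icc (hKcd hinf).1 (hKcd hsup).2
  have hsubset : K ⊆ Icc (sInf K) (sSup K) := fun x hx =>
    ⟨csInf_le hK.bddBelow hx, le_csSup hK.bddAbove hx⟩
  have hlength : sInf K < sSup K := by
    obtain ⟨x, hx⟩ := hne
    have hmem i : φ i x ∈ K := hφK.le (mem_iUnion_of_mem i (mem_image_of_mem _ hx))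
    exact (hsubset (hmem 0)).1.trans_lt <|
      (hlt (Fin.last_pos' (n := m)) x (hKcd hx) x (hKcd hx)).trans_le (hsubset (hmem _)).2
  exact ⟨
    { c := sInf K
      d := sSup K
      ratio := ρ
      branch := φ
      attractor := K
      c_lt_d := hlength
      d_sub_c_lt_one := (sub_le_sub (hKcd hsup).2 (hKcd hinf).1).trans_lt hdc
      ratio_lt_one := hρ
      isCompact_attractor := hK
      c_mem_attractor := hinf
      d_mem_attractor := hsup
      attractor_subset := hsubset
      iUnion_image := hφK
      lipschitzOnWith_branch := fun i => (hlip i).mono hhull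
      branch_mono_or_anti := fun i =>
        (hmono i).imp (fun h => h.mono hhull) fun h => h.mono hhull
      branch_lt_branch := fun _ _ h x hx y hy => hlt h x (hhull hx) y (hhull hy) }, rfl, rfl, rfl⟩

theorem gapLogRatio_mem_Icc (I : IntervalIFS m) {j : Fin m} (hr : 0 < r)
    (h : r ≤ I.leftEnd j.succ - I.rightEnd j.castSucc) :
    I.gapLogRatio j ∈ Icc (Real.log r) 0 := by
  have hle : I.leftEnd j.succ - I.rightEnd j.castSucc ≤ I.d - I.c :=
    sub_le_sub (I.attractor_subset (I.leftEnd_mem_attractor _)).2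
      (I.attractor_subset (I.rightEnd_mem_attractor _)).1
  have hlog : Real.log (I.d - I.c) ≤ 0 :=
    Real.log_nonpos (sub_nonneg.2 I.c_lt_d.le) I.d_sub_c_lt_one.le
  rw [gapLogRatio, abs_sub_comm, abs_of_pos (hr.trans_le h), abs_sub_comm,
    abs_of_pos (sub_pos.2 I.c_lt_d)]
  have hlower := Real.log_le_log hr h
  exact ⟨by linarith, sub_nonpos.2 (Real.log_le_log (hr.trans_le h) hle)⟩

end IntervalIFS

namespace IsSeparated

open Set

variable {m : ℕ} {a b : Fin (m + 1) → ℝ} {c d r ε : ℝ} {S S' : ℝ → ℝ} {i : Fin (m + 1)} {x : ℝ}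

theorem gapLogRatio_mem_Icc (h : IsSeparated a b c d r)
    (hS : ∀ i, IsFullBranch S S' ε (a i) (b i) c d) {I : IntervalIFS m}
    (hbranch : I.branch = fun i => Function.invFunOn S (Icc (a i) (b i)))
    (hsubset : I.attractor ⊆ Icc c d) (j : Fin m) :
    I.gapLogRatio j ∈ Icc (Real.log r) 0 := by
  have himage i : I.branch i '' I.attractor ⊆ Icc (a i) (b i) := by
    rw [hbranch]
    exact ((hS i).mapsTo_inv.mono_left hsubset).image_subset
  have hleft := himage _ (I.leftEnd_mem_image j.succ)
  have hright := himage _ (I.rightEnd_mem_image j.castSucc)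
  exact I.gapLogRatio_mem_Icc h.pos (by linarith [h.le_gap j.castSucc_lt_succ, hleft.1, hright.2])

variable [NeZero m]

theorem length_add_le (h : IsSeparated a b c d r) (i : Fin (m + 1)) : b i - a i + r ≤ d - c := by
  have hpos := h.pos
  by_cases hi : i = Fin.last m
  · have hgap := h.le_gap (hi ▸ Fin.last_pos' : 0 < i)
    linarith [h.le_right i, h.left_le 0, h.le_length 0]
  · have hgap := h.le_gap (Fin.lt_last_iff_ne_last.2 hi)
    linarith [h.left_le i, h.le_right (Fin.last m), h.le_length (Fin.last m)]

theorem one_add_half_le_abs_deriv (h : IsSeparated a b c d r) (hε : ε ≤ r / 2)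
    (hS : IsFullBranch S S' ε (a i) (b i) c d) (hx : x ∈ Icc (a i) (b i)) : 1 + r / 2 ≤ |S' x| :=
  hS.one_add_half_le_abs_deriv hε h.pos (h.le_length i) (h.length_add_le i) h.sub_lt_one.le hx

theorem exists_intervalIFS (h : IsSeparated a b c d r) (hε : ε ≤ r / 2)
    (hS : ∀ i, IsFullBranch S S' ε (a i) (b i) c d)
    (hK : IsClosed (maximalInvariantSet S (⋃ i, Icc (a i) (b i))))
    (hne : (maximalInvariantSet S (⋃ i, Icc (a i) (b i))).Nonempty) :
    ∃ I : IntervalIFS m, (I.branch = fun i => Function.invFunOn S (Icc (a i) (b i))) ∧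
      I.attractor = maximalInvariantSet S (⋃ i, Icc (a i) (b i)) ∧
      I.ratio = (1 + r / 2)⁻¹.toNNReal := by
  have hr := h.pos
  have hcd : c ≤ d := by linarith [h.length_add_le 0, h.le_length 0]
  have hJ i : Icc (a i) (b i) ⊆ Icc c d := Icc_subset_Icc (h.left_le i) (h.le_right i)
  have hsubset : maximalInvariantSet S (⋃ i, Icc (a i) (b i)) ⊆ Icc c d := fun x hx =>
    iUnion_subset hJ hx.1
  have hlip i : LipschitzOnWith (1 + r / 2)⁻¹.toNNReal (Function.invFunOn S (Icc (a i) (b i)))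
      (Icc c d) := by
    refine (hS i).lipschitzOnWith_inv fun x hx => ?_
    rw [Real.coe_toNNReal _ (by positivity), ← div_eq_inv_mul, one_le_div (by positivity)]
    exact h.one_add_half_le_abs_deriv hε (hS i) hx
  refine IntervalIFS.exists_branch_eq_and_attractor_eq h.sub_lt_one ?_
    (isCompact_Icc.of_isClosed_subset hK hsubset) hne hsubset ?_ hlip
    (fun i => (hS i).inv_mono_or_anti hcd (hlip i).continuousOn) ?_
  · rw [Real.toNNReal_lt_one]
    exact inv_lt_one_of_one_lt₀ (by linarith)
  · refine iUnion_image_maximalInvariantSet (fun i => (hS i).mapsTo_inv)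
      (fun i => (hS i).rightInvOn_inv) (fun i => mapsTo_iff_image_subset.2 (hS i).image_eq.le)
      (fun i => ?_) hJ
    refine injOn_of_hasDerivWithinAt_ne_zero ordConnected_Icc (hS i).hasDerivWithinAt
      fun x hx => abs_pos.1 ?_
    linarith [h.one_add_half_le_abs_deriv hε (hS i) hx]
  · intro i i' hi x hx y hy
    linarith [((hS i).mapsTo_inv hx).2, ((hS i').mapsTo_inv hy).1, h.le_gap hi]

theorem logRatio_mem_Icc (h : IsSeparated a b c d r) (hε : ε ≤ r / 2)
    (hS : IsFullBranch S S' ε (a i) (b i) c d) {I : IntervalIFS m}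
    (hbranch : I.branch i = Function.invFunOn S (Icc (a i) (b i)))
    (hhull : Icc I.c I.d ⊆ Icc c d) :
    I.logRatio i ∈ Icc (-Real.log (1 / r + 1)) (-Real.log (1 + r / 2)) := by
  have hr := h.pos
  have hlower : ∀ x ∈ Icc (a i) (b i), 1 + r / 2 ≤ |S' x| := fun x hx =>
    h.one_add_half_le_abs_deriv hε hS hx
  obtain ⟨ξ, hξ, hslope⟩ := hS.exists_logSlope_inv_eq
    (fun x hx => abs_pos.1 (lt_of_lt_of_le (by positivity) (hlower x hx)))
    (hhull I.left_mem) (hhull I.right_mem) I.c_lt_d.ne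
  rw [IntervalIFS.logRatio, hbranch, hslope]
  refine ⟨neg_le_neg (Real.log_le_log (lt_of_lt_of_le (by positivity) (hlower ξ hξ)) ?_),
    neg_le_neg (Real.log_le_log (by positivity) (hlower ξ hξ))⟩
  exact hS.abs_deriv_le hε hr (h.le_length i)
    (by linarith [h.length_add_le i, h.sub_lt_one]) h.sub_lt_one.le hξ

theorem isNearlyAffine (h : IsSeparated a b c d r) (hε₀ : 0 ≤ ε) (hε : ε ≤ r / 2)
    (hS : ∀ i, IsFullBranch S S' ε (a i) (b i) c d) {I : IntervalIFS m}
    (hbranch : I.branch = fun i => Function.invFunOn S (Icc (a i) (b i)))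
    (hratio : I.ratio = (1 + r / 2)⁻¹.toNNReal) (hhull : Icc I.c I.d ⊆ Icc c d) :
    I.IsNearlyAffine I.logRatio I.gapLogRatio (2 * ε / r) := by
  have hr := h.pos
  have hρ : (I.ratio : ℝ) = (1 + r / 2)⁻¹ := by
    rw [hratio, Real.coe_toNNReal _ (by positivity)]
  have hdist : 2 * ε / r = ε * I.ratio / (1 - I.ratio) := by
    have hsub : 1 - (1 + r / 2)⁻¹ = r / 2 * (1 + r / 2)⁻¹ := by
      field_simp
      ring
    rw [hρ, hsub]
    field_simp
  rw [hdist]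
  refine IntervalIFS.isNearlyAffine_of_hasLogDistortion (by positivity) fun i => ?_
  have hlower : ∀ x ∈ Icc (a i) (b i), 1 + r / 2 ≤ |S' x| := fun x hx =>
    h.one_add_half_le_abs_deriv hε (hS i) hx
  have hforward : HasLogDistortion S (Icc (a i) (b i)) ε :=
    .of_hasDerivWithinAt ordConnected_Icc (hS i).hasDerivWithinAt
      (fun x hx => by linarith [hlower x hx]) hε₀ (hS i).abs_deriv_sub_le
  have hi := congrFun hbranch i
  refine hi ▸ hforward.rightInverse hε₀ ordConnected_Icc ((hS i).mapsTo_inv.mono_left hhull)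
    (fun x hx => (hS i).rightInvOn_inv (hhull hx)) (hi ▸ I.lipschitzOnWith_branch i)
    (hi ▸ I.branch_mono_or_anti i)

theorem exists_pos_forall_not_isC1Minimal (h : IsSeparated a b c d r) :
    ∃ ε > 0, ∀ S S' : ℝ → ℝ, (∀ i, IsFullBranch S S' ε (a i) (b i) c d) →
      ¬IsC1Minimal (((↑) : ℝ → AddCircle (1 : ℝ)) ''
        maximalInvariantSet S (⋃ i, Icc (a i) (b i))) := by
  have hr := h.pos
  have hneg : -Real.log (1 + r / 2) < 0 := neg_lt_zero.2 (Real.log_pos (by linarith))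
  obtain ⟨δ, hδ, hmain⟩ := IntervalIFS.exists_pos_forall_not_isC1Minimal (m := m)
    (P := Icc (fun _ => -Real.log (1 / r + 1), fun _ => Real.log r)
      (fun _ => -Real.log (1 + r / 2), fun _ => 0))
    isCompact_Icc fun q hq i => (hq.2.1 i).trans_lt hneg
  refine ⟨min (r / 2) (δ * r / 2), by positivity, fun S S' hS hmin => ?_⟩
  have hε := min_le_left (r / 2) (δ * r / 2)
  obtain ⟨_, _, -, -, -, -, hclosed, hne, -⟩ := id hmin
  have hsubset : maximalInvariantSet S (⋃ i, Icc (a i) (b i)) ⊆ Icc c d := fun x hx =>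
    iUnion_subset (fun i => Icc_subset_Icc (h.left_le i) (h.le_right i)) hx.1
  obtain ⟨I, hbranch, hattractor, hratio⟩ := h.exists_intervalIFS hε hS
    (isClosed_of_isClosed_image_coe hsubset h.sub_lt_one hclosed) hne.of_image
  rw [← hattractor] at hmin hsubset
  have hhull : Icc I.c I.d ⊆ Icc c d := Icc_subset_Icc (hsubset I.c_mem_attractor).1
    (hsubset I.d_mem_attractor).2
  have haffine := h.isNearlyAffine (by positivity) hε hS hbranch hratio hhull
  have hlog i := h.logRatio_mem_Icc hε (hS i) (congrFun hbranch i) hhull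
  have hgap := h.gapLogRatio_mem_Icc hS hbranch hsubset
  refine hmain (I.logRatio, I.gapLogRatio)
    ⟨⟨fun i => (hlog i).1, fun j => (hgap j).1⟩, fun i => (hlog i).2, fun j => (hgap j).2⟩ I
    (haffine.mono (fun i => ?_) fun j => ?_) hmin
  all_goals
    rw [sub_self, abs_zero, zero_add, div_le_iff₀ hr]
    linarith [min_le_right (r / 2) (δ * r / 2)]

end IsSeparated

theorem exists_perm_forall_lt_of_disjoint {n : ℕ} {a b : Fin n → ℝ} (hab : ∀ i, a i ≤ b i)
    (hdisj : ∀ i j, i ≠ j → Disjoint (Set.Icc (a i) (b i)) (Set.Icc (a j) (b j))) :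
    ∃ σ : Equiv.Perm (Fin n), ∀ ⦃i j⦄, i < j → b (σ i) < a (σ j) := by
  refine ⟨Tuple.sort a, fun i j hij => not_le.1 fun hle => ?_⟩
  have hsort : a (Tuple.sort a i) ≤ a (Tuple.sort a j) := Tuple.monotone_sort a hij.le
  exact Set.disjoint_left.1 (hdisj _ _ ((Tuple.sort a).injective.ne hij.ne)) ⟨hsort, hle⟩
    (Set.left_mem_Icc.2 (hab _))

theorem corollary_nearly_affine_not_C1_minimal_general {k : ℕ} (hk : 2 ≤ k) {a b : Fin k → ℝ}
    (hab : ∀ j, a j < b j) {c d : ℝ} (hdc : d - c < 1)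
    (hdisj : ∀ i j, i ≠ j → Disjoint (Set.Icc (a i) (b i)) (Set.Icc (a j) (b j)))
    (hsub : (⋃ j, Set.Icc (a j) (b j)) ⊆ Set.Icc c d) :
    ∃ ε > 0, ∀ S S' : ℝ → ℝ, (∀ j, IsFullBranch S S' ε (a j) (b j) c d) →
      ¬IsC1Minimal (((↑) : ℝ → AddCircle (1 : ℝ)) ''
        maximalInvariantSet S (⋃ j, Set.Icc (a j) (b j))) := by
  obtain ⟨m, rfl⟩ : ∃ m, k = m + 1 := ⟨k - 1, by omega⟩
  have : NeZero m := ⟨by omega⟩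
  obtain ⟨σ, hσ⟩ := exists_perm_forall_lt_of_disjoint (fun j => (hab j).le) hdisj
  obtain ⟨r, hr⟩ := exists_isSeparated (a := a ∘ σ) (b := b ∘ σ) (fun i => hab (σ i)) hσ
    (fun i => (Set.subset_iUnion _ (σ i)).trans hsub) hdc
  obtain ⟨ε, hε, h⟩ := hr.exists_pos_forall_not_isC1Minimal
  refine ⟨ε, hε, fun S S' hS => ?_⟩
  have hunion := σ.surjective.iUnion_comp fun j => Set.Icc (a j) (b j)
  exact hunion ▸ h S S' fun i => hS (σ i)

/-- Corollary: There exists ε > 0 such that for all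
A, S ∈ S²(I,L) with A locally affine and ‖S − A‖_{C²} < ε, the maximal
invariant Cantor set C_S is not C¹-minimal. -/
theorem corollary_nearly_affine_not_C1_minimal
    (k : ℕ) (hk : 2 ≤ k) (a b : Fin k → ℝ) (hab : ∀ j, a j < b j)
    (c d : ℝ) (hcd : c < d) (hc : 0 ≤ c) (hd : d < 1)
    (hdisj : ∀ i j : Fin k, i ≠ j →
      Disjoint (Set.Icc (a i) (b i)) (Set.Icc (a j) (b j)))
    (hsub : (⋃ j, Set.Icc (a j) (b j)) ⊆ Set.Icc c d) :
    ∃ ε > 0, ∀ A A' A'' S S' S'' : ℝ → ℝ,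
      (∀ x ∈ ⋃ j, Set.Icc (a j) (b j), HasDerivAt A (A' x) x) →
      (∀ x ∈ ⋃ j, Set.Icc (a j) (b j), HasDerivAt A' (A'' x) x) →
      ContinuousOn A'' (⋃ j, Set.Icc (a j) (b j)) →
      (∀ x ∈ ⋃ j, Set.Icc (a j) (b j), 1 < |A' x|) →
      (∀ j, A '' Set.Icc (a j) (b j) = Set.Icc c d) →
      (∀ j : Fin k, ∀ x ∈ Set.Icc (a j) (b j), A'' x = 0) →
      (∀ x ∈ ⋃ j, Set.Icc (a j) (b j), HasDerivAt S (S' x) x) →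
      (∀ x ∈ ⋃ j, Set.Icc (a j) (b j), HasDerivAt S' (S'' x) x) →
      ContinuousOn S'' (⋃ j, Set.Icc (a j) (b j)) →
      (∀ x ∈ ⋃ j, Set.Icc (a j) (b j), 1 < |S' x|) →
      (∀ j, S '' Set.Icc (a j) (b j) = Set.Icc c d) →
      (∀ x ∈ ⋃ j, Set.Icc (a j) (b j),
        |S x - A x| + |S' x - A' x| + |S'' x - A'' x| < ε) →
      ¬ IsC1Minimal ((fun x : ℝ => ((x : ℝ) : AddCircle (1 : ℝ))) ''
        {x ∈ ⋃ j, Set.Icc (a j) (b j) |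
          ∀ n : ℕ, S^[n] x ∈ ⋃ j, Set.Icc (a j) (b j)}) := by
  obtain ⟨ε, hε, h⟩ := corollary_nearly_affine_not_C1_minimal_general hk hab
    (by linarith : d - c < 1) hdisj hsub
  refine ⟨ε, hε, fun A _ A'' S S' S'' _ _ _ _ _ hA'' hS hS' _ _ himage hclose =>
    h S S' fun j => ⟨fun x hx => ?_, ?_, himage j⟩⟩
  · exact (hS x (Set.mem_iUnion_of_mem j hx)).hasDerivWithinAt
  · intro x hx y hy
    refine (convex_Icc (a j) (b j)).norm_image_sub_le_of_norm_hasDerivWithin_le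
      (fun z hz => (hS' z (Set.mem_iUnion_of_mem j hz)).hasDerivWithinAt) (fun z hz => ?_) hy hx
    have hz' := hclose z (Set.mem_iUnion_of_mem j hz)
    rw [hA'' j z hz, sub_zero] at hz'
    exact (le_add_of_nonneg_left (by positivity)).trans hz'.le
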